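/- arXiv:2312.15647 — 2 statements merged into one kernel-verified Lean document; each statement's English description precedes it below -/
import Mathlib

section
/- Let (X,d) be a compact metric space, f: X → X a continuous map, μ ∈ M_f(X), and ε > 0. Then the infimum of h_μ(f,ξ) over all finite measurable partitions ξ of X with diam ξ < ε and μ(∂ξ) = 0 equals the infimum of h_μ(f,ξ) over all finite measurable partitions ξ of X with diam ξ < ε, where ∂ξ denotes the union of the topological boundaries of the elements of ξ. -/
open MeasureTheory Filter Set Topology
open scoped ENNReal NNReal

noncomputable section

namespace MMD

variable {X : Type*}

/-! ### Bowen balls, Bowen topological entropy and metric mean dimension -/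

/-- The Bowen ball `B_n(x,ε) = {y | d_n(x,y) < ε}` where `d_n` is the Bowen metric. -/
def bowenBall [PseudoMetricSpace X] (f : X → X) (x : X) (n : ℕ) (ε : ℝ) : Set X :=
  {y | ∀ i < n, dist (f^[i] x) (f^[i] y) < ε}

/-- The weight sum `Σ_{(x,n) ∈ C} exp (-s n)` of a (countable) collection of Bowen balls,
encoded by its set of centers/lengths. -/
def coverSum (s : ℝ) (C : Set (X × ℕ)) : ℝ≥0∞ :=
  ∑' p : C, ENNReal.ofReal (Real.exp (-s * ((p : X × ℕ).2 : ℝ)))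

/-- `m(Z,s,N,ε,f)`: infimum over countable (or finite) covers of `Z` by Bowen balls
`B_{n_i}(x_i,ε)` with `n_i ≥ N` of `Σ exp (-s n_i)`. -/
def mB [PseudoMetricSpace X] (f : X → X) (Z : Set X) (s : ℝ) (N : ℕ) (ε : ℝ) : ℝ≥0∞ :=
  ⨅ (C : Set (X × ℕ)) (_ : C.Countable) (_ : ∀ p ∈ C, N ≤ p.2)
    (_ : Z ⊆ ⋃ p ∈ C, bowenBall f p.1 p.2 ε), coverSum s C

/-- `m(Z,s,ε) = lim_{N→∞} m(Z,s,N,ε,f)`; the limit of this monotone quantity is the sup. -/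
def mBLim [PseudoMetricSpace X] (f : X → X) (Z : Set X) (s : ℝ) (ε : ℝ) : ℝ≥0∞ :=
  ⨆ N : ℕ, mB f Z s N ε

/-- The Bowen topological entropy of `Z` at scale `ε`:
`h_top^B(Z,f,ε) = inf {s | m(Z,s,ε) = 0}`. -/
def hB [PseudoMetricSpace X] (f : X → X) (Z : Set X) (ε : ℝ) : ℝ :=
  sInf {s : ℝ | mBLim f Z s ε = 0}

/-- Upper Bowen metric mean dimension of `Z`. -/
def mdimUpper [PseudoMetricSpace X] (f : X → X) (Z : Set X) : ℝ :=
  limsup (fun ε : ℝ => hB f Z ε / |Real.log ε|) (𝓝[>] (0:ℝ))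

/-- Lower Bowen metric mean dimension of `Z`. -/
def mdimLower [PseudoMetricSpace X] (f : X → X) (Z : Set X) : ℝ :=
  liminf (fun ε : ℝ => hB f Z ε / |Real.log ε|) (𝓝[>] (0:ℝ))

/-! ### Finite measurable partitions and measure-theoretic entropy -/

/-- `P` is a finite measurable partition of `X` (mod `μ`): its elements are measurable,
they cover `X` up to a `μ`-null set, and they pairwise intersect in `μ`-null sets. -/
def IsPartition [MeasurableSpace X] (μ : Measure X) (P : Finset (Set X)) : Prop :=
  (∀ A ∈ P, MeasurableSet A) ∧ μ (Set.univ \ ⋃ A ∈ P, A) = 0 ∧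
    ∀ A ∈ P, ∀ B ∈ P, A ≠ B → μ (A ∩ B) = 0

/-- Static entropy `H_μ(P) = -Σ_{A∈P} μ(A) log μ(A)`. -/
def partEnt [MeasurableSpace X] (μ : Measure X) (P : Finset (Set X)) : ℝ :=
  ∑ A ∈ P, Real.negMulLog ((μ A).toReal)

/-- Join (common refinement) of two finite families of sets. -/
def joinParts (P Q : Finset (Set X)) : Finset (Set X) :=
  letI := Classical.decEq (Set X)
  (P ×ˢ Q).image fun p => p.1 ∩ p.2

/-- `dynJoin f P n = ⋁_{j=0}^{n-1} f^{-j} P`. -/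
def dynJoin (f : X → X) (P : Finset (Set X)) : ℕ → Finset (Set X)
  | 0 => {Set.univ}
  | n + 1 =>
      letI := Classical.decEq (Set X)
      joinParts P ((dynJoin f P n).image fun A => f ⁻¹' A)

/-- Measure-theoretic entropy of `f` w.r.t. the partition `P`:
`h_μ(f,P) = lim_n (1/n) H_μ(⋁_{j<n} f^{-j}P)` (the limit exists, hence equals the `limsup`). -/
def dynEnt [MeasurableSpace X] (μ : Measure X) (f : X → X) (P : Finset (Set X)) : ℝ :=
  limsup (fun n : ℕ => partEnt μ (dynJoin f P n) / n) atTop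

/-- `diam P < ε`, i.e. every element of `P` has diameter `< ε`. -/
def partDiamLt [PseudoMetricSpace X] (P : Finset (Set X)) (ε : ℝ) : Prop :=
  ∀ A ∈ P, Metric.diam A < ε

/-- `inf_{ξ : diam ξ < ε} h_μ(f,ξ)`, the infimum over all finite measurable partitions of `X`
with diameter `< ε`. -/
def infEnt [PseudoMetricSpace X] [MeasurableSpace X] (μ : Measure X) (f : X → X) (ε : ℝ) : ℝ :=
  sInf (dynEnt μ f '' {P : Finset (Set X) | IsPartition μ P ∧ partDiamLt P ε})

/-! ### Empirical measures, generic points and saturated sets -/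

/-- The `n`-th empirical measure `E_n(x) = (1/n) Σ_{j<n} δ_{f^j x}` (defined as `E_1(x)`
for `n = 0`, a junk value). -/
def empMeasure [MeasurableSpace X] (f : X → X) (x : X) (n : ℕ) : Measure X :=
  ((max n 1 : ℕ) : ℝ≥0∞)⁻¹ • ∑ j ∈ Finset.range (max n 1), Measure.dirac (f^[j] x)

instance [MeasurableSpace X] (f : X → X) (x : X) (n : ℕ) :
    IsProbabilityMeasure (empMeasure f x n) := by
  constructor
  have h1 : (0:ℕ) < max n 1 := lt_of_lt_of_le one_pos (le_max_right n 1)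
  have hsum : (∑ j ∈ Finset.range (max n 1), Measure.dirac (f^[j] x)) Set.univ
      = ((max n 1 : ℕ) : ℝ≥0∞) := by
    rw [Measure.finset_sum_apply]
    simp
  simp only [empMeasure, Measure.smul_apply, smul_eq_mul, hsum]
  exact ENNReal.inv_mul_cancel (by exact_mod_cast h1.ne') (by simp)

/-- The `n`-th empirical measure as a probability measure. -/
def empProb [MeasurableSpace X] (f : X → X) (x : X) (n : ℕ) : ProbabilityMeasure X :=
  ⟨empMeasure f x n, inferInstance⟩

/-- `V_f(x)`: the set of weak* limit points of the sequence of empirical measures of `x`. -/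
def Vf [MetricSpace X] [MeasurableSpace X] [BorelSpace X] (f : X → X) (x : X) :
    Set (ProbabilityMeasure X) :=
  {ν | MapClusterPt ν atTop (empProb f x)}

/-- The saturated set `G_K = {x | V_f(x) = K}`. -/
def GK [MetricSpace X] [MeasurableSpace X] [BorelSpace X] (f : X → X)
    (K : Set (ProbabilityMeasure X)) : Set X :=
  {x | Vf f x = K}

/-- The generic set `G_μ = {x | V_f(x) = {μ}}`. -/
def genSet [MetricSpace X] [MeasurableSpace X] [BorelSpace X] (f : X → X)
    (μ : ProbabilityMeasure X) : Set X :=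
  GK f {μ}

/-! ### Invariant measures, supports, measure center, omega-limit sets -/

/-- `μ` is an `f`-invariant (Borel probability) measure. -/
def InvariantProb [MeasurableSpace X] (f : X → X) (μ : ProbabilityMeasure X) : Prop :=
  Measure.map f (μ : Measure X) = (μ : Measure X)

/-- The set `M_f(X)` of invariant probability measures. -/
def invSet [MeasurableSpace X] (f : X → X) : Set (ProbabilityMeasure X) :=
  {μ | InvariantProb f μ}

/-- The support of a measure: points all of whose neighborhoods have positive measure. -/
def measSupport [TopologicalSpace X] [MeasurableSpace X] (μ : Measure X) : Set X :=
  {x | ∀ U ∈ 𝓝 x, 0 < μ U}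

/-- The measure center `C_f(X) = closure (⋃_{μ ∈ M_f(X)} S_μ)`. -/
def measCenter [TopologicalSpace X] [MeasurableSpace X] (f : X → X) : Set X :=
  closure (⋃ μ ∈ invSet f, measSupport (μ : Measure X))

/-- The omega-limit set `ω_f(x) = ⋂_n closure {f^k x : k ≥ n}`. -/
def omegaSet [TopologicalSpace X] (f : X → X) (x : X) : Set X :=
  ⋂ n : ℕ, closure {y | ∃ k, n ≤ k ∧ f^[k] x = y}

/-- The set of points whose omega-limit set contains the measure center. -/
def CtrSet [TopologicalSpace X] [MeasurableSpace X] (f : X → X) : Set X :=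
  {x | measCenter f ⊆ omegaSet f x}

/-! ### Blow-up functions and the g-almost product property -/

/-- A blowup function: nondecreasing, unbounded, `g n < n` and `g n / n → 0`. -/
structure IsBlowup (g : ℕ → ℕ) : Prop where
  mono : Monotone g
  unbounded : ∀ C : ℕ, ∃ n, C < g n
  lt_self : ∀ n, 0 < n → g n < n
  ratio_tendsto_zero : Tendsto (fun n : ℕ => (g n : ℝ) / n) atTop (𝓝 0)

/-- The g-blowup `B_n(g;x,ε)` of the Bowen ball `B_n(x,ε)`. -/
def blowupBall [PseudoMetricSpace X] (f : X → X) (g : ℕ → ℕ) (x : X) (n : ℕ) (ε : ℝ) :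
    Set X :=
  {y | ∃ Λ : Finset ℕ, Λ ⊆ Finset.range n ∧
    letI := Classical.decEq ℕ
    (Finset.range n \ Λ).card ≤ g n ∧ ∀ j ∈ Λ, dist (f^[j] x) (f^[j] y) ≤ ε}

/-- The g-almost product property. -/
def GAlmostProduct [PseudoMetricSpace X] (f : X → X) (g : ℕ → ℕ) : Prop :=
  ∃ m : ℝ → ℕ, (∀ s t : ℝ, 0 < s → s ≤ t → m t ≤ m s) ∧
    ∀ (k : ℕ) (x : ℕ → X) (ε : ℕ → ℝ) (n : ℕ → ℕ),
      (∀ j < k, 0 < ε j) → (∀ j < k, m (ε j) ≤ n j) →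
      (⋂ j ∈ Finset.range k,
        (f^[∑ i ∈ Finset.range j, n i] ⁻¹' blowupBall f g (x j) (n j) (ε j))).Nonempty

/-! ### Separated sets and Pfister–Sullivan quantities -/

/-- The number of times `0 ≤ j < n` at which the orbits of `x` and `y` are `ε`-apart. -/
def sepCount [PseudoMetricSpace X] (f : X → X) (x y : X) (n : ℕ) (ε : ℝ) : ℕ :=
  letI := Classical.decPred fun j : ℕ => ε < dist (f^[j] x) (f^[j] y)
  ((Finset.range n).filter fun j => ε < dist (f^[j] x) (f^[j] y)).card

/-- `N(F; δ, n, ε)`: maximal cardinality of a `(δ,n,ε)`-separated subset of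
`X_{n,F} = {x | E_n(x) ∈ F}`. -/
def NsepD [MetricSpace X] [MeasurableSpace X] [BorelSpace X] (f : X → X)
    (F : Set (ProbabilityMeasure X)) (δ : ℝ) (n : ℕ) (ε : ℝ) : ℕ :=
  sSup {c : ℕ | ∃ E : Finset X, (↑E : Set X) ⊆ {x | empProb f x n ∈ F} ∧
    (∀ x ∈ E, ∀ y ∈ E, x ≠ y → δ * n ≤ (sepCount f x y n ε : ℝ)) ∧ E.card = c}

/-- `N(F; n, ε)`: maximal cardinality of an `(n,ε)`-separated subset of `X_{n,F}`. -/
def NsepP [MetricSpace X] [MeasurableSpace X] [BorelSpace X] (f : X → X)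
    (F : Set (ProbabilityMeasure X)) (n : ℕ) (ε : ℝ) : ℕ :=
  sSup {c : ℕ | ∃ E : Finset X, (↑E : Set X) ⊆ {x | empProb f x n ∈ F} ∧
    (∀ x ∈ E, ∀ y ∈ E, x ≠ y → ∃ i < n, ε < dist (f^[i] x) (f^[i] y)) ∧ E.card = c}

/-- `PS-bar(μ,δ,ε) = inf_{F ∋ μ} limsup_n (1/n) ln N(F;δ,n,ε)`. -/
def PSbar [MetricSpace X] [MeasurableSpace X] [BorelSpace X] (f : X → X)
    (μ : ProbabilityMeasure X) (δ ε : ℝ) : ℝ :=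
  sInf ((fun F => limsup (fun n : ℕ => Real.log (NsepD f F δ n ε) / n) atTop) ''
    {F : Set (ProbabilityMeasure X) | F ∈ 𝓝 μ})

/-! ### Convex combinations of probability measures -/

/-- The convex hull `cov{μ_1,…,μ_m}` of finitely many probability measures. -/
def convexCombos [MeasurableSpace X] {m : ℕ} (μ : Fin m → ProbabilityMeasure X) :
    Set (ProbabilityMeasure X) :=
  {ν | ∃ t : Fin m → ℝ≥0∞, (∑ i, t i) = 1 ∧
    (ν : Measure X) = ∑ i, t i • (μ i : Measure X)}

/-- The convex combination `θ μ + (1-θ) ν` of two probability measures (with `θ`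
clamped into `[0,1]`). -/
def mixP [MeasurableSpace X] (μ ν : ProbabilityMeasure X) (θ : ℝ) : ProbabilityMeasure X :=
  ⟨ENNReal.ofReal (min (max θ 0) 1) • (μ : Measure X)
      + ENNReal.ofReal (1 - min (max θ 0) 1) • (ν : Measure X), by
    constructor
    set t := min (max θ 0) 1 with ht
    have h0 : 0 ≤ t := le_min (le_max_right θ 0) zero_le_one
    have h1 : t ≤ 1 := min_le_right _ _
    rw [Measure.add_apply, Measure.smul_apply, Measure.smul_apply, measure_univ, measure_univ,
      smul_eq_mul, smul_eq_mul, mul_one, mul_one, ← ENNReal.ofReal_add h0 (by linarith)]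
    have : t + (1 - t) = 1 := by ring
    rw [this, ENNReal.ofReal_one]⟩

/-- Condition A.3: for invariant `μ, ν` with `α μ ≠ α ν`, the map
`θ ↦ α(θμ + (1-θ)ν)` is not constant on any nondegenerate subinterval of `[0,1]`. -/
def CondA3 [MeasurableSpace X] (f : X → X) (α : ProbabilityMeasure X → ℝ) : Prop :=
  ∀ μ ∈ invSet f, ∀ ν ∈ invSet f, α μ ≠ α ν →
    ∀ a b : ℝ, 0 ≤ a → a < b → b ≤ 1 →
      ¬ (∀ s ∈ Set.Icc a b, ∀ t ∈ Set.Icc a b, α (mixP μ ν s) = α (mixP μ ν t))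

end MMD

end

open MMD MeasureTheory Filter Set Topology
open scoped ENNReal NNReal

noncomputable section

/-!
Any two finite partitions satisfy `h(f,Q) ≤ h(f,P) + H(Q | P)`, so it is enough to find, for each
`P` of diameter `< ε`, partitions `Q` of diameter `< ε` with null boundary and `H(Q | P)`
arbitrarily small; the latter holds as soon as each `A \ Q_A` with `A ∈ P` has small measure.

All but countably many thickenings of a given set have null boundary. Applied to a closed subset
of `A` this approximates `A` in measure by a null-boundary set `C_A`, and applied to `A` itself it
yields a null-boundary neighbourhood `R_A`; both stay within a thin thickening of `A`, hence
`C_A ∪ R_A` has diameter `< ε`. Making the `C_A` disjoint costs little measure because the `A` are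
disjoint, and the rest of the space is distributed among the `R_A`. As null-boundary sets form an
algebra, nothing in this construction leaves that class.
-/

namespace MMD

open Function

section RealInequalities

variable {ι κ : Type*} [Fintype ι] [Fintype κ]

lemma negMulLog_sum_le {p : ι → ℝ} (hp : ∀ i, 0 ≤ p i) :
    Real.negMulLog (∑ i, p i) ≤ ∑ i, Real.negMulLog (p i) := by
  calc Real.negMulLog (∑ i, p i)
      = ∑ i, -(p i * Real.log (∑ j, p j)) := by
        rw [Finset.sum_neg_distrib, ← Finset.sum_mul, Real.negMulLog, neg_mul]
    _ ≤ ∑ i, Real.negMulLog (p i) := Finset.sum_le_sum fun i _ => by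
        rw [Real.negMulLog, neg_mul, neg_le_neg_iff]
        rcases (hp i).eq_or_lt with hi | hi
        · simp [← hi]
        · gcongr
          exact Finset.single_le_sum (fun j _ => hp j) (Finset.mem_univ i)

/- This is `log x ≤ x - 1` at `x = r c / (T p)`, multiplied by `p`. -/
lemma negMulLog_le_of_le_marginals {p r c T : ℝ} (hp : 0 ≤ p) (hpr : p ≤ r) (hpc : p ≤ c)
    (hrT : r ≤ T) :
    Real.negMulLog p ≤
      p * Real.log T - p * Real.log r - p * Real.log c + (r * c / T - p) := by
  rcases hp.eq_or_lt with rfl | hp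
  · simpa using div_nonneg (mul_nonneg hpr hpc) (hpr.trans hrT)
  have hr : 0 < r := hp.trans_le hpr
  have hc : 0 < c := hp.trans_le hpc
  have hT : 0 < T := hr.trans_le hrT
  have hlog := Real.log_le_sub_one_of_pos (x := r * c / T / p) (by positivity)
  rw [Real.log_div (by positivity) hp.ne', Real.log_div (by positivity) hT.ne',
    Real.log_mul hr.ne' hc.ne'] at hlog
  have hmul := mul_le_mul_of_nonneg_left hlog hp.le
  rw [mul_sub p (r * c / T / p), mul_div_cancel₀ _ hp.ne'] at hmul
  rw [Real.negMulLog]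
  linarith

lemma sum_negMulLog_add_negMulLog_sum_le {p : ι → κ → ℝ} (hp : ∀ i j, 0 ≤ p i j) :
    ∑ i, ∑ j, Real.negMulLog (p i j) + Real.negMulLog (∑ i, ∑ j, p i j) ≤
      ∑ i, Real.negMulLog (∑ j, p i j) + ∑ j, Real.negMulLog (∑ i, p i j) := by
  set row : ι → ℝ := fun i => ∑ j, p i j with row_def
  set col : κ → ℝ := fun j => ∑ i, p i j with col_def
  set total := ∑ i, row i with total_def
  have sum_col : ∑ j, col j = total := Finset.sum_comm
  have row_nonneg (i) : 0 ≤ row i := Finset.sum_nonneg fun j _ => hp i j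
  have pointwise (i j) : Real.negMulLog (p i j) ≤ p i j * Real.log total -
      p i j * Real.log (row i) - p i j * Real.log (col j) + (row i * col j / total - p i j) :=
    negMulLog_le_of_le_marginals (hp i j)
      (Finset.single_le_sum (f := p i) (fun j _ => hp i j) (Finset.mem_univ j))
      (Finset.single_le_sum (f := (p · j)) (fun i _ => hp i j) (Finset.mem_univ i))
      (Finset.single_le_sum (fun i _ => row_nonneg i) (Finset.mem_univ i))
  have sum_log_total : ∑ i, ∑ j, p i j * Real.log total = total * Real.log total := by
    simp_rw [← Finset.sum_mul, total_def, row_def]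
  have sum_log_row : ∑ i, ∑ j, p i j * Real.log (row i) = ∑ i, row i * Real.log (row i) := by
    simp_rw [← Finset.sum_mul, row_def]
  have sum_log_col : ∑ i, ∑ j, p i j * Real.log (col j) = ∑ j, col j * Real.log (col j) := by
    rw [Finset.sum_comm]
    simp_rw [← Finset.sum_mul, col_def]
  have sum_product : ∑ i, ∑ j, row i * col j / total = total := by
    simp_rw [← Finset.sum_div, ← Finset.sum_mul_sum, sum_col, ← total_def, mul_self_div_self]
  have hsum := Finset.sum_le_sum fun i (_ : i ∈ Finset.univ) =>
    Finset.sum_le_sum fun j (_ : j ∈ Finset.univ) => pointwise i j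
  simp only [Finset.sum_add_distrib, Finset.sum_sub_distrib, sum_log_total, sum_log_row,
    sum_log_col, sum_product] at hsum
  simp only [Real.negMulLog, neg_mul, Finset.sum_neg_distrib] at hsum ⊢
  linarith

end RealInequalities

section Entropy

variable {X ι κ l ι' κ' : Type*}

/-- The join `s ∨ t` of two indexed families of sets. Indexing by pairs keeps coinciding
intersections apart, unlike `joinParts`. -/
def join (s : ι → Set X) (t : κ → Set X) : ι × κ → Set X := fun p => s p.1 ∩ t p.2

variable [MeasurableSpace X]

/-- The entropy `H_μ(s)` of a finite indexed family of sets, the counterpart of `partEnt`. -/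
def entropy [Fintype ι] (μ : Measure X) (s : ι → Set X) : ℝ :=
  ∑ i, Real.negMulLog (μ.real (s i))

/-- The conditional entropy `H_μ(s | t)`, defined through the chain rule
`H_μ(s ∨ t) = H_μ(t) + H_μ(s | t)`. -/
def condEntropy [Fintype ι] [Fintype κ] (μ : Measure X) (s : ι → Set X) (t : κ → Set X) : ℝ :=
  entropy μ (join s t) - entropy μ t

/-- A measurable partition modulo `μ`-null sets, as an indexed family; the counterpart of
`IsPartition`. -/
structure IsAEPartition (μ : Measure X) (s : ι → Set X) : Prop where
  measurableSet : ∀ i, MeasurableSet (s i)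
  aedisjoint : Pairwise (AEDisjoint μ on s)
  ae_exists_mem : ∀ᵐ x ∂μ, ∃ i, x ∈ s i

section AEPartition

variable {μ : Measure X} {s : ι → Set X}

lemma IsAEPartition.of_absolutelyContinuous {ν : Measure X} (hs : IsAEPartition μ s)
    (hν : ν ≪ μ) : IsAEPartition ν s where
  measurableSet := hs.measurableSet
  aedisjoint _ _ hij := hν (hs.aedisjoint hij)
  ae_exists_mem := hν.ae_le hs.ae_exists_mem

lemma IsAEPartition.preimage {f : X → X} (hs : IsAEPartition μ s)
    (hf : MeasurePreserving f μ μ) : IsAEPartition μ fun i => f ⁻¹' s i where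
  measurableSet i := hf.measurable (hs.measurableSet i)
  aedisjoint _ _ hij := hf.quasiMeasurePreserving.preimage_null (hs.aedisjoint hij)
  ae_exists_mem := hf.quasiMeasurePreserving.ae hs.ae_exists_mem

lemma isAEPartition_const_univ (μ : Measure X) : IsAEPartition μ fun _ : Unit => univ where
  measurableSet _ := .univ
  aedisjoint i j hij := absurd (Subsingleton.elim i j) hij
  ae_exists_mem := by simp

end AEPartition

variable [Fintype ι] [Fintype κ] [Fintype l] [Fintype ι'] [Fintype κ'] {μ : Measure X}
  {s : ι → Set X} {t : κ → Set X}

lemma entropy_comp_equiv (μ : Measure X) (s : ι → Set X) (e : ι' ≃ ι) :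
    entropy μ (s ∘ e) = entropy μ s :=
  e.sum_comp fun i => Real.negMulLog (μ.real (s i))

lemma condEntropy_comp_equiv (μ : Measure X) (s : ι → Set X) (t : κ → Set X) (e : ι' ≃ ι)
    (e' : κ' ≃ κ) : condEntropy μ (s ∘ e) (t ∘ e') = condEntropy μ s t := by
  have hjoin : join (s ∘ e) (t ∘ e') = join s t ∘ e.prodCongr e' := rfl
  rw [condEntropy, condEntropy, hjoin, entropy_comp_equiv, entropy_comp_equiv]

lemma entropy_join_assoc (μ : Measure X) (s : ι → Set X) (t : κ → Set X) (u : l → Set X) :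
    entropy μ (join (join s t) u) = entropy μ (join s (join t u)) := by
  rw [← entropy_comp_equiv μ (join s (join t u)) (Equiv.prodAssoc ι κ l)]
  congr 1
  exact funext fun p => inter_assoc _ _ _

lemma condEntropy_join_left (μ : Measure X) (s : ι → Set X) (t : κ → Set X) (u : l → Set X) :
    condEntropy μ (join s t) u = condEntropy μ s (join t u) + condEntropy μ t u := by
  rw [condEntropy, condEntropy, condEntropy, entropy_join_assoc, sub_add_sub_cancel]

lemma condEntropy_join_right_comm (μ : Measure X) (s : ι → Set X) (t : κ → Set X)
    (u : l → Set X) : condEntropy μ s (join t u) = condEntropy μ s (join u t) := by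
  have hjoin : join t u = join u t ∘ Equiv.prodComm κ l := funext fun p => inter_comm _ _
  rw [hjoin]
  exact condEntropy_comp_equiv μ s (join u t) (Equiv.refl ι) (Equiv.prodComm κ l)

lemma entropy_preimage {f : X → X} (hf : MeasurePreserving f μ μ) (hs : ∀ i, MeasurableSet (s i)) :
    entropy μ (fun i => f ⁻¹' s i) = entropy μ s :=
  Finset.sum_congr rfl fun i _ => by rw [hf.measureReal_preimage (hs i).nullMeasurableSet]

lemma condEntropy_preimage {f : X → X} (hf : MeasurePreserving f μ μ)
    (hs : ∀ i, MeasurableSet (s i)) (ht : ∀ j, MeasurableSet (t j)) :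
    condEntropy μ (fun i => f ⁻¹' s i) (fun j => f ⁻¹' t j) = condEntropy μ s t := by
  have hjoin : join (fun i => f ⁻¹' s i) (fun j => f ⁻¹' t j) = fun p => f ⁻¹' join s t p := rfl
  rw [condEntropy, condEntropy, hjoin, entropy_preimage hf ht,
    entropy_preimage (s := join s t) hf fun p => (hs p.1).inter (ht p.2)]

variable [IsFiniteMeasure μ]

lemma IsAEPartition.sum_measureReal (hs : IsAEPartition μ s) :
    ∑ i, μ.real (s i) = μ.real univ := by
  rw [← measureReal_biUnion_finset₀ (fun i _ j _ hij => hs.aedisjoint hij)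
    fun i _ => (hs.measurableSet i).nullMeasurableSet]
  refine measureReal_congr (eventuallyEq_univ.2 ?_)
  filter_upwards [hs.ae_exists_mem] with x hx
  simpa using hx

lemma IsAEPartition.sum_measureReal_inter (hs : IsAEPartition μ s) (A : Set X) :
    ∑ i, μ.real (s i ∩ A) = μ.real A := by
  have h := (hs.of_absolutelyContinuous Measure.restrict_le_self.absolutelyContinuous :
    IsAEPartition (μ.restrict A) s).sum_measureReal
  simpa only [measureReal_restrict_apply (hs.measurableSet _), measureReal_restrict_apply .univ,
    univ_inter] using h

lemma entropy_le_entropy_join (s : ι → Set X) (ht : IsAEPartition μ t) :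
    entropy μ s ≤ entropy μ (join s t) := by
  rw [entropy, entropy, Fintype.sum_prod_type]
  refine Finset.sum_le_sum fun i _ => ?_
  rw [← ht.sum_measureReal_inter (s i)]
  simpa only [join, inter_comm (s i)] using negMulLog_sum_le fun j => measureReal_nonneg

lemma condEntropy_join_right_le (hs : IsAEPartition μ s) (ht : IsAEPartition μ t)
    (u : l → Set X) : condEntropy μ s (join t u) ≤ condEntropy μ s u := by
  set m : l → κ → ι → ℝ := fun k j i => μ.real (s i ∩ (t j ∩ u k)) with m_def
  have sum_t (k i) : ∑ j, m k j i = μ.real (s i ∩ u k) := by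
    simp_rw [m_def, inter_left_comm (s i), ht.sum_measureReal_inter]
  have sum_s (k j) : ∑ i, m k j i = μ.real (t j ∩ u k) := hs.sum_measureReal_inter _
  have sum_st (k) : ∑ j, ∑ i, m k j i = μ.real (u k) := by
    simp_rw [sum_s, ht.sum_measureReal_inter]
  have entropy_stu : entropy μ (join s (join t u)) =
      ∑ k, ∑ j, ∑ i, Real.negMulLog (m k j i) := by
    simp_rw [entropy, Fintype.sum_prod_type_right, join, m_def]
  have entropy_su : entropy μ (join s u) = ∑ k, ∑ i, Real.negMulLog (∑ j, m k j i) := by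
    simp_rw [entropy, Fintype.sum_prod_type_right, join, sum_t]
  have entropy_tu : entropy μ (join t u) = ∑ k, ∑ j, Real.negMulLog (∑ i, m k j i) := by
    simp_rw [entropy, Fintype.sum_prod_type_right, join, sum_s]
  have entropy_u : entropy μ u = ∑ k, Real.negMulLog (∑ j, ∑ i, m k j i) := by
    simp_rw [entropy, sum_st]
  have key := Finset.sum_le_sum fun k (_ : k ∈ Finset.univ) =>
    sum_negMulLog_add_negMulLog_sum_le (p := m k) fun _ _ => measureReal_nonneg
  rw [Finset.sum_add_distrib, Finset.sum_add_distrib, ← entropy_stu, ← entropy_su, ← entropy_tu,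
    ← entropy_u] at key
  rw [condEntropy, condEntropy]
  linarith

lemma condEntropy_join_join_le (hs : IsAEPartition μ s) (ht : IsAEPartition μ t)
    {u : ι' → Set X} {v : κ' → Set X} (hu : IsAEPartition μ u) (hv : IsAEPartition μ v) :
    condEntropy μ (join s t) (join u v) ≤ condEntropy μ s u + condEntropy μ t v :=
  calc condEntropy μ (join s t) (join u v)
      = condEntropy μ s (join t (join u v)) + condEntropy μ t (join u v) :=
        condEntropy_join_left ..
    _ ≤ condEntropy μ s (join v u) + condEntropy μ t v := by
        rw [condEntropy_join_right_comm μ s v u]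
        exact add_le_add (condEntropy_join_right_le hs ht _) (condEntropy_join_right_le ht hu v)
    _ ≤ condEntropy μ s u + condEntropy μ t v := by
        gcongr
        exact condEntropy_join_right_le hs hv u

end Entropy

section Itinerary

variable {X ι κ : Type*} {f : X → X}

/-- The set of points whose orbit visits `s (w 0), …, s (w (n - 1))` at times `0, …, n - 1`. As `w`
varies these sets form the partition `⋁_{j<n} f^{-j} s`, the counterpart of `dynJoin`. -/
def itinerarySet (f : X → X) (s : ι → Set X) (n : ℕ) : (Fin n → ι) → Set X :=
  fun w => ⋂ k : Fin n, f^[k] ⁻¹' s (w k)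

lemma itinerarySet_cons (f : X → X) (s : ι → Set X) {n : ℕ} (i : ι) (w : Fin n → ι) :
    itinerarySet f s (n + 1) (Fin.cons i w) = s i ∩ f ⁻¹' itinerarySet f s n w := by
  ext x
  simp [itinerarySet, Fin.forall_fin_succ]

lemma itinerarySet_succ_comp_consEquiv (f : X → X) (s : ι → Set X) (n : ℕ) :
    itinerarySet f s (n + 1) ∘ Fin.consEquiv (fun _ => ι) =
      join s fun w => f ⁻¹' itinerarySet f s n w :=
  funext fun p => itinerarySet_cons f s p.1 p.2

lemma coe_dynJoin {P : Finset (Set X)} {s : ι → Set X} (hP : (P : Set (Set X)) = range s)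
    (f : X → X) (n : ℕ) : (dynJoin f P n : Set (Set X)) = range (itinerarySet f s n) := by
  classical
  induction n with
  | zero => simp [dynJoin, itinerarySet, range_unique]
  | succ n ih =>
    rw [← (Fin.consEquiv fun _ : Fin (n + 1) => ι).surjective.range_comp,
      itinerarySet_succ_comp_consEquiv]
    simp only [dynJoin, joinParts, Finset.coe_image, Finset.coe_product, hP, ih, ← range_comp,
      prod_range_range_eq]
    rfl

variable [MeasurableSpace X] {μ : Measure X} {s : ι → Set X} {t : κ → Set X}

lemma IsAEPartition.itinerarySet (hs : IsAEPartition μ s) (hf : MeasurePreserving f μ μ) (n : ℕ) :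
    IsAEPartition μ (itinerarySet f s n) where
  measurableSet _ := .iInter fun k => (hf.iterate k).measurable (hs.measurableSet _)
  aedisjoint w w' hw := by
    obtain ⟨k, hk⟩ := ne_iff.1 hw
    exact ((hs.preimage (hf.iterate k)).aedisjoint hk).mono (iInter_subset _ k) (iInter_subset _ k)
  ae_exists_mem := by
    have visits (k : Fin n) : ∀ᵐ x ∂μ, ∃ i, x ∈ f^[k] ⁻¹' s i :=
      (hs.preimage (hf.iterate k)).ae_exists_mem
    filter_upwards [ae_all_iff.2 visits] with x hx
    choose w hw using hx
    exact ⟨w, mem_iInter.2 hw⟩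

variable [Fintype ι] [Fintype κ] [IsFiniteMeasure μ]

lemma condEntropy_itinerarySet_le (hf : MeasurePreserving f μ μ) (hs : IsAEPartition μ s)
    (ht : IsAEPartition μ t) (n : ℕ) :
    condEntropy μ (itinerarySet f s n) (itinerarySet f t n) ≤ n * condEntropy μ s t := by
  induction n with
  | zero => simp [condEntropy, entropy, join, itinerarySet]
  | succ n ih =>
    have hsn := hs.itinerarySet hf n
    have htn := ht.itinerarySet hf n
    calc condEntropy μ (itinerarySet f s (n + 1)) (itinerarySet f t (n + 1))
        = condEntropy μ (join s fun w => f ⁻¹' itinerarySet f s n w)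
            (join t fun w => f ⁻¹' itinerarySet f t n w) := by
          rw [← itinerarySet_succ_comp_consEquiv, ← itinerarySet_succ_comp_consEquiv,
            condEntropy_comp_equiv]
      _ ≤ condEntropy μ s t + condEntropy μ (fun w => f ⁻¹' itinerarySet f s n w)
            (fun w => f ⁻¹' itinerarySet f t n w) :=
          condEntropy_join_join_le hs (hsn.preimage hf) ht (htn.preimage hf)
      _ = condEntropy μ s t + condEntropy μ (itinerarySet f s n) (itinerarySet f t n) := by
          rw [condEntropy_preimage hf hsn.measurableSet htn.measurableSet]
      _ ≤ (n + 1 : ℕ) * condEntropy μ s t := by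
          push_cast
          linarith

lemma entropy_itinerarySet_le (hf : MeasurePreserving f μ μ) (hs : IsAEPartition μ s)
    (ht : IsAEPartition μ t) (n : ℕ) :
    entropy μ (itinerarySet f s n) ≤
      entropy μ (itinerarySet f t n) + n * condEntropy μ s t := by
  have hjoin := entropy_le_entropy_join (itinerarySet f s n) (ht.itinerarySet hf n)
  have hcond := condEntropy_itinerarySet_le hf hs ht n
  rw [condEntropy] at hcond
  linarith

end Itinerary

section DynamicalEntropy

variable {X ι κ : Type*} [MeasurableSpace X] {μ : Measure X} {f : X → X} {P Q : Finset (Set X)}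
  {s : ι → Set X} {t : κ → Set X}

lemma IsPartition.exists_isAEPartition (hP : IsPartition μ P) :
    ∃ s : Fin P.card → Set X, IsAEPartition μ s ∧ (P : Set (Set X)) = range s := by
  obtain ⟨measurable, cover, disjoint⟩ := hP
  refine ⟨fun i => P.equivFin.symm i, ⟨fun i => measurable _ (P.equivFin.symm i).2, ?_, ?_⟩, ?_⟩
  · intro i j hij
    refine disjoint _ (P.equivFin.symm i).2 _ (P.equivFin.symm j).2 fun h => hij ?_
    exact P.equivFin.symm.injective (Subtype.ext h)
  · rw [← compl_eq_univ_sdiff] at cover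
    filter_upwards [measure_eq_zero_iff_ae_notMem.1 cover] with x hx
    obtain ⟨A, hA, hxA⟩ := mem_iUnion₂.1 (not_not.1 hx)
    exact ⟨P.equivFin ⟨A, hA⟩, by simpa using hxA⟩
  · rw [show (fun i => (P.equivFin.symm i : Set X)) = Subtype.val ∘ P.equivFin.symm from rfl,
      P.equivFin.symm.surjective.range_comp]
    simp

lemma IsAEPartition.isPartition (hs : IsAEPartition μ s) (hP : (P : Set (Set X)) = range s) :
    IsPartition μ P := by
  simp only [IsPartition, ← Finset.mem_coe, hP, forall_mem_range, biUnion_range]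
  refine ⟨hs.measurableSet, ?_, fun i j hij => hs.aedisjoint fun h => hij (congrArg s h)⟩
  rw [← compl_eq_univ_sdiff, measure_eq_zero_iff_ae_notMem]
  filter_upwards [hs.ae_exists_mem] with x hx
  simpa using hx

lemma partEnt_eq_entropy [Fintype ι] (hP : (P : Set (Set X)) = range s)
    (hs : Pairwise (AEDisjoint μ on s)) : partEnt μ P = entropy μ s := by
  classical
  obtain rfl : P = Finset.univ.image s := by ext A; simp [← Finset.mem_coe, hP]
  refine Finset.sum_image_of_pairwise_eq_zero fun i _ j _ hij heq => ?_
  have null : μ (s i) = 0 := by simpa [onFun, AEDisjoint, ← heq] using hs hij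
  simp [null]

lemma partEnt_nonneg [IsProbabilityMeasure μ] (P : Finset (Set X)) : 0 ≤ partEnt μ P :=
  Finset.sum_nonneg fun A _ => Real.negMulLog_nonneg measureReal_nonneg
    (measureReal_le_one (μ := μ) (s := A))

lemma isBoundedUnder_ge_partEnt_div [IsProbabilityMeasure μ] (f : X → X) (P : Finset (Set X)) :
    IsBoundedUnder (· ≥ ·) atTop fun n : ℕ => partEnt μ (dynJoin f P n) / n :=
  isBoundedUnder_of ⟨0, fun n => div_nonneg (partEnt_nonneg _) n.cast_nonneg⟩

lemma dynEnt_nonneg [IsProbabilityMeasure μ] (f : X → X) (P : Finset (Set X)) :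
    0 ≤ dynEnt μ f P := by
  rw [dynEnt, limsup_eq]
  refine Real.sInf_nonneg fun a ha => ?_
  obtain ⟨n, hn⟩ := ha.exists
  exact (div_nonneg (partEnt_nonneg _) n.cast_nonneg).trans hn

lemma partEnt_dynJoin_div_le [Fintype ι] [Fintype κ] [IsFiniteMeasure μ]
    (hf : MeasurePreserving f μ μ)
    (hs : IsAEPartition μ s) (hP : (P : Set (Set X)) = range s) (ht : IsAEPartition μ t)
    (hQ : (Q : Set (Set X)) = range t) {n : ℕ} (hn : n ≠ 0) :
    partEnt μ (dynJoin f P n) / n ≤ partEnt μ (dynJoin f Q n) / n + condEntropy μ s t := by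
  have hn' : (0 : ℝ) < n := by positivity
  rw [partEnt_eq_entropy (coe_dynJoin hP f n) (hs.itinerarySet hf n).aedisjoint,
    partEnt_eq_entropy (coe_dynJoin hQ f n) (ht.itinerarySet hf n).aedisjoint,
    div_add' _ _ _ hn'.ne', div_le_div_iff_of_pos_right hn', mul_comm (condEntropy μ s t)]
  exact entropy_itinerarySet_le hf hs ht n

variable [IsProbabilityMeasure μ]

lemma isBoundedUnder_le_partEnt_div [Finite ι] (hf : MeasurePreserving f μ μ)
    (hs : IsAEPartition μ s) (hP : (P : Set (Set X)) = range s) :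
    IsBoundedUnder (· ≤ ·) atTop fun n : ℕ => partEnt μ (dynJoin f P n) / n := by
  have := Fintype.ofFinite ι
  have htriv : (({univ} : Finset (Set X)) : Set (Set X)) = range fun _ : Unit => univ := by simp
  refine isBoundedUnder_of_eventually_le (a := condEntropy μ s fun _ : Unit => univ) ?_
  filter_upwards [eventually_ne_atTop 0] with n hn
  have hle := partEnt_dynJoin_div_le hf hs hP (isAEPartition_const_univ μ) htriv hn
  have hzero : partEnt μ (dynJoin f {univ} n) = 0 := by
    rw [partEnt_eq_entropy (coe_dynJoin htriv f n)
      ((isAEPartition_const_univ μ).itinerarySet hf n).aedisjoint]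
    simp [entropy, itinerarySet]
  rwa [hzero, zero_div, zero_add] at hle

lemma dynEnt_le_add_condEntropy [Fintype ι] [Fintype κ] (hf : MeasurePreserving f μ μ)
    (hs : IsAEPartition μ s) (hP : (P : Set (Set X)) = range s) (ht : IsAEPartition μ t)
    (hQ : (Q : Set (Set X)) = range t) : dynEnt μ f P ≤ dynEnt μ f Q + condEntropy μ s t := by
  have hbdd := isBoundedUnder_le_partEnt_div hf ht hQ
  rw [dynEnt, dynEnt,
    ← limsup_add_const _ _ _ hbdd (isBoundedUnder_ge_partEnt_div f Q).isCoboundedUnder_le]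
  refine limsup_le_limsup ?_ (isBoundedUnder_ge_partEnt_div f P).isCoboundedUnder_le
    (isBoundedUnder_le_add hbdd isBoundedUnder_const)
  filter_upwards [eventually_ne_atTop 0] with n hn
  exact partEnt_dynJoin_div_le hf hs hP ht hQ hn

end DynamicalEntropy

section Continuity

variable {X ι : Type*} [MeasurableSpace X]

lemma measureReal_inter_le_measureReal_sdiff {μ : Measure X} [IsFiniteMeasure μ] {A B : Set X}
    (hAB : AEDisjoint μ A B) (E : Set X) :
    μ.real (A ∩ E) ≤ μ.real (E \ B) := by
  refine ENNReal.toReal_mono (measure_ne_top μ _) (measure_mono_ae ?_)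
  filter_upwards [measure_eq_zero_iff_ae_notMem.1 hAB] with x hx
  exact fun hxAE => ⟨hxAE.2, fun hxB => hx ⟨hxAE.1, hxB⟩⟩

lemma exists_condEntropy_lt [Fintype ι] (μ : Measure X) [IsFiniteMeasure μ] (s : ι → Set X) {c : ℝ}
    (hc : 0 < c) :
    ∃ η : ℝ≥0∞, η ≠ 0 ∧ ∀ t : ι → Set X, (∀ i, MeasurableSet (t i)) →
      Pairwise (AEDisjoint μ on t) → (∀ i, μ (s i \ t i) < η) → condEntropy μ t s < c := by
  classical
  let diagonal : ι × ι → ℝ := fun p => if p.1 = p.2 then μ.real (s p.2) else 0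
  have sum_diagonal : ∑ p, Real.negMulLog (diagonal p) = entropy μ s := by
    simp [entropy, Fintype.sum_prod_type_right, diagonal, apply_ite Real.negMulLog]
  have near_diagonal : ∀ᶠ z in 𝓝 diagonal, ∑ p, Real.negMulLog (z p) < entropy μ s + c := by
    have continuous : Continuous fun z : ι × ι → ℝ => ∑ p, Real.negMulLog (z p) := by fun_prop
    refine continuous.continuousAt.eventually_lt continuousAt_const ?_
    rw [sum_diagonal]
    linarith
  obtain ⟨η, hη, hlt⟩ := Metric.eventually_nhds_iff.1 near_diagonal
  refine ⟨ENNReal.ofReal η, by simpa using hη, fun t measurable disjoint small => ?_⟩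
  rw [condEntropy, sub_lt_iff_lt_add']
  refine hlt ((dist_pi_lt_iff hη).2 fun ⟨i, j⟩ => ?_)
  have small_j : μ.real (s j \ t j) < η :=
    (ENNReal.lt_ofReal_iff_toReal_lt (measure_ne_top _ _)).1 (small j)
  rw [Real.dist_eq]
  obtain rfl | hij := eq_or_ne i j
  · have := measureReal_inter_add_sdiff (μ := μ) (s := s i) (measurable i)
    simp only [join, diagonal, if_true, inter_comm (t i)]
    rw [abs_sub_comm, abs_of_nonneg] <;> linarith [measureReal_nonneg (μ := μ) (s := s i \ t i)]
  · simp only [join, diagonal, if_neg hij, sub_zero, abs_of_nonneg measureReal_nonneg]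
    exact (measureReal_inter_le_measureReal_sdiff (disjoint hij) _).trans_lt small_j

end Continuity

section ContinuitySets

variable {X : Type*} [MeasurableSpace X]

/-- The `μ`-continuity sets: the measurable sets with `μ`-null boundary. -/
def continuitySets [TopologicalSpace X] (μ : Measure X) : Set (Set X) :=
  {A | MeasurableSet A ∧ μ (frontier A) = 0}

lemma isSetAlgebra_continuitySets [TopologicalSpace X] (μ : Measure X) :
    IsSetAlgebra (continuitySets μ) where
  empty_mem := by simp [continuitySets]
  compl_mem A hA := ⟨hA.1.compl, by rw [frontier_compl]; exact hA.2⟩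
  union_mem A B hA hB := ⟨hA.1.union hB.1, measure_mono_null (frontier_union_subset A B) <|
    measure_union_null (measure_mono_null inter_subset_left hA.2)
      (measure_mono_null inter_subset_right hB.2)⟩

variable [PseudoMetricSpace X] [BorelSpace X] {μ : Measure X} [IsFiniteMeasure μ] {A : Set X}

lemma exists_thickening_mem_continuitySets (μ : Measure X) [SFinite μ] (A : Set X) {δ : ℝ}
    (hδ : 0 < δ) : ∃ r ∈ Ioo 0 δ, Metric.thickening r A ∈ continuitySets μ := by
  obtain ⟨r, hr, hnull⟩ := exists_null_frontier_thickening μ A hδ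
  exact ⟨r, hr, Metric.isOpen_thickening.measurableSet, hnull⟩

lemma exists_continuitySet_measure_symmDiff_lt (hA : MeasurableSet A) {δ : ℝ} (hδ : 0 < δ)
    {η : ℝ≥0∞} (hη : η ≠ 0) :
    ∃ C ∈ continuitySets μ, C ⊆ Metric.thickening δ A ∧ μ (symmDiff A C) < η := by
  have hη2 : η / 2 ≠ 0 := (ENNReal.half_pos hη).ne'
  obtain ⟨F, hFA, hF, hAF⟩ := hA.exists_isClosed_sdiff_lt (measure_ne_top μ A) hη2
  have thin : ∀ᶠ r in 𝓝[>] (0 : ℝ), μ (Metric.thickening r F) < μ F + η / 2 :=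
    (tendsto_measure_thickening_of_isClosed ⟨1, one_pos, measure_ne_top μ _⟩ hF).eventually_lt_const
      (ENNReal.lt_add_right (measure_ne_top μ F) hη2)
  obtain ⟨ρ, hρ, thin_ρ⟩ := (thin.and (Ioo_mem_nhdsGT hδ)).exists
  obtain ⟨r, hr, hC⟩ := exists_thickening_mem_continuitySets μ F thin_ρ.1
  refine ⟨Metric.thickening r F, hC, ?_, ?_⟩
  · exact (Metric.thickening_mono (hr.2.trans thin_ρ.2).le F).trans
      (Metric.thickening_subset_of_subset δ hFA)
  have hFC : F ⊆ Metric.thickening r F := Metric.self_subset_thickening hr.1 F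
  have hCF : μ (Metric.thickening r F \ F) < η / 2 :=
    measure_sdiff_lt_of_lt_add hF.measurableSet.nullMeasurableSet hFC (measure_ne_top μ F)
      ((measure_mono (Metric.thickening_mono hr.2.le F)).trans_lt hρ)
  calc μ (symmDiff A (Metric.thickening r F))
      ≤ μ (A \ F ∪ Metric.thickening r F \ F) :=
        measure_mono (union_subset_union (sdiff_subset_sdiff_right hFC)
          (sdiff_subset_sdiff_right hFA))
    _ ≤ μ (A \ F) + μ (Metric.thickening r F \ F) := measure_union_le _ _
    _ < η / 2 + η / 2 := ENNReal.add_lt_add hAF hCF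
    _ = η := ENNReal.add_halves η

end ContinuitySets

section DisjointedExtension

variable {X ι : Type*} [LinearOrder ι] [LocallyFiniteOrderBot ι] {C R : ι → Set X}

/-- The disjoint family made of `disjointed C`, each member of which is enlarged by the part of
`disjointed R` that the sets `C j` leave uncovered. -/
def disjointedExtension (C R : ι → Set X) (i : ι) : Set X :=
  disjointed C i ∪ disjointed R i \ ⋃ j, C j

lemma disjointedExtension_subset (C R : ι → Set X) (i : ι) :
    disjointedExtension C R i ⊆ C i ∪ R i :=
  union_subset_union (disjointed_subset C i) (sdiff_subset.trans (disjointed_subset R i))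

lemma iUnion_disjointedExtension (C R : ι → Set X) :
    ⋃ i, disjointedExtension C R i = (⋃ i, C i) ∪ ⋃ i, R i := by
  simp_rw [disjointedExtension, iUnion_union_distrib, ← iUnion_sdiff, iUnion_disjointed,
    union_sdiff_self]

lemma pairwise_disjoint_disjointedExtension (C R : ι → Set X) :
    Pairwise (Disjoint on disjointedExtension C R) := by
  have hsub (i) : disjointed C i ⊆ ⋃ j, C j :=
    (disjointed_subset C i).trans (subset_iUnion C i)
  intro i j hij
  refine ((disjoint_disjointed C hij).union_left ?_).union_right (.union_left ?_ ?_)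
  · exact disjoint_sdiff_left.mono_right (hsub j)
  · exact disjoint_sdiff_right.mono_left (hsub i)
  · exact (disjoint_disjointed R hij).mono sdiff_subset sdiff_subset

lemma disjointedExtension_mem [Finite ι] {𝒜 : Set (Set X)} (h𝒜 : IsSetAlgebra 𝒜)
    (hC : ∀ i, C i ∈ 𝒜) (hR : ∀ i, R i ∈ 𝒜) (i : ι) : disjointedExtension C R i ∈ 𝒜 := by
  have := Fintype.ofFinite ι
  have hunion : ⋃ j, C j ∈ 𝒜 := by
    simpa using h𝒜.biUnion_mem Finset.univ fun j _ => hC j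
  exact h𝒜.union_mem (h𝒜.isSetRing.disjointed_mem hC i)
    (h𝒜.sdiff_mem (h𝒜.isSetRing.disjointed_mem hR i) hunion)

/- A point of `s i` that avoids the other `s j` and every `s j ∆ C j` lies in `C i` only. -/
lemma measure_sdiff_disjointed_le [Fintype ι] [MeasurableSpace X] {μ : Measure X} {s : ι → Set X}
    (hs : Pairwise (AEDisjoint μ on s)) (C : ι → Set X) (i : ι) :
    μ (s i \ disjointed C i) ≤ ∑ j, μ (symmDiff (s j) (C j)) := by
  have avoids : ∀ᵐ x ∂μ, ∀ j ≠ i, x ∉ s j ∩ s i :=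
    ae_all_iff.2 fun j => eventually_imp_distrib_left.2 fun hji =>
      measure_eq_zero_iff_ae_notMem.1 (hs hji)
  refine (measure_mono_ae ?_).trans (measure_iUnion_fintype_le μ fun j => symmDiff (s j) (C j))
  filter_upwards [avoids] with x hx
  rintro ⟨hxs, hxC⟩
  refine mem_iUnion.2 ?_
  by_contra! hsymm
  have mem_iff (j) : x ∈ s j ↔ x ∈ C j := by
    have := hsymm j
    rw [mem_symmDiff] at this
    tauto
  refine hxC ?_
  rw [disjointed_eq_inter_compl]
  exact ⟨(mem_iff i).1 hxs, mem_iInter₂.2 fun j hj hxj => hx j hj.ne ⟨(mem_iff j).2 hxj, hxs⟩⟩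

end DisjointedExtension

section Approximation

variable {X : Type*} [PseudoMetricSpace X]

lemma exists_pos_forall_diam_lt_of_subset_thickening [BoundedSpace X]
    {ι : Type*} [Finite ι] {s : ι → Set X} {ε : ℝ} (hs : ∀ i, Metric.diam (s i) < ε) :
    ∃ δ > 0, ∀ i, ∀ A ⊆ Metric.thickening δ (s i), Metric.diam A < ε := by
  have small : ∀ᶠ δ in 𝓝[>] (0 : ℝ), ∀ i, Metric.diam (s i) + 2 * δ < ε := by
    refine eventually_all.2 fun i => ?_
    have hpos : 0 < (ε - Metric.diam (s i)) / 2 := by linarith [hs i]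
    filter_upwards [Ioo_mem_nhdsGT hpos] with δ hδ
    linarith [hδ.2]
  obtain ⟨δ, hδs, hδ⟩ := (small.and self_mem_nhdsWithin).exists
  refine ⟨δ, hδ, fun i A hA => ?_⟩
  calc Metric.diam A ≤ Metric.diam (Metric.thickening δ (s i)) := Metric.diam_mono hA (.all _)
    _ ≤ Metric.diam (s i) + 2 * δ := Metric.diam_thickening_le _ (le_of_lt hδ)
    _ < ε := hδs i

variable [MeasurableSpace X] [BorelSpace X] {μ : Measure X}

lemma IsAEPartition.exists_continuitySets_approx {ι : Type*} [Finite ι] [LinearOrder ι]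
    [LocallyFiniteOrderBot ι] [IsFiniteMeasure μ] {s : ι → Set X} (hs : IsAEPartition μ s)
    {δ : ℝ} (hδ : 0 < δ) {η : ℝ≥0∞} (hη : η ≠ 0) :
    ∃ t : ι → Set X, IsAEPartition μ t ∧ (∀ i, t i ∈ continuitySets μ) ∧
      (∀ i, t i ⊆ Metric.thickening δ (s i)) ∧ ∀ i, μ (s i \ t i) < η := by
  have := Fintype.ofFinite ι
  choose r hr hR using fun i => exists_thickening_mem_continuitySets μ (s i) hδ
  obtain ⟨θ, hθ, sum_θ⟩ := ENNReal.exists_pos_sum_of_countable' hη ι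
  choose C hC hCR hsC using fun i =>
    exists_continuitySet_measure_symmDiff_lt (μ := μ) (hs.measurableSet i) hδ (hθ i).ne'
  set R : ι → Set X := fun i => Metric.thickening (r i) (s i)
  have hsR (i) : s i ⊆ R i := Metric.self_subset_thickening (hr i).1 (s i)
  have hRδ (i) : R i ⊆ Metric.thickening δ (s i) := Metric.thickening_mono (hr i).2.le (s i)
  have mem_continuitySets := disjointedExtension_mem (isSetAlgebra_continuitySets μ) hC hR
  refine ⟨disjointedExtension C R, ⟨fun i => (mem_continuitySets i).1, ?_, ?_⟩,
    mem_continuitySets, fun i => ?_, fun i => ?_⟩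
  · exact fun i j hij => (pairwise_disjoint_disjointedExtension C R hij).aedisjoint
  · filter_upwards [hs.ae_exists_mem] with x ⟨i, hi⟩
    rw [← mem_iUnion, iUnion_disjointedExtension]
    exact .inr (mem_iUnion.2 ⟨i, hsR i hi⟩)
  · exact (disjointedExtension_subset C R i).trans (union_subset (hCR i) (hRδ i))
  · calc μ (s i \ disjointedExtension C R i)
        ≤ μ (s i \ disjointed C i) := measure_mono (sdiff_subset_sdiff_right subset_union_left)
      _ ≤ ∑ j, μ (symmDiff (s j) (C j)) := measure_sdiff_disjointed_le hs.aedisjoint C i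
      _ ≤ ∑ j, θ j := Finset.sum_le_sum fun j _ => (hsC j).le
      _ < η := (tsum_fintype θ).symm.trans_lt sum_θ

lemma exists_null_frontier_dynEnt_le_add [BoundedSpace X] [IsProbabilityMeasure μ] {f : X → X}
    (hf : MeasurePreserving f μ μ) {P : Finset (Set X)} (hP : IsPartition μ P) {ε : ℝ}
    (hε : partDiamLt P ε) {c : ℝ} (hc : 0 < c) :
    ∃ Q : Finset (Set X), IsPartition μ Q ∧ partDiamLt Q ε ∧ μ (⋃ A ∈ Q, frontier A) = 0 ∧
      dynEnt μ f Q ≤ dynEnt μ f P + c := by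
  obtain ⟨s, hs, hPs⟩ := hP.exists_isAEPartition
  have hdiam (i) : Metric.diam (s i) < ε :=
    hε _ (Finset.mem_coe.1 (hPs ▸ mem_range_self i))
  obtain ⟨δ, hδ, diam_lt⟩ := exists_pos_forall_diam_lt_of_subset_thickening hdiam
  obtain ⟨η, hη, condEntropy_lt⟩ := exists_condEntropy_lt μ s hc
  obtain ⟨t, ht, ht_mem, ht_thick, ht_small⟩ := hs.exists_continuitySets_approx hδ hη
  have hQt : ((finite_range t).toFinset : Set (Set X)) = range t := (finite_range t).coe_toFinset
  refine ⟨(finite_range t).toFinset, ht.isPartition hQt, ?_, ?_, ?_⟩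
  · simpa [partDiamLt] using fun i => diam_lt i (t i) (ht_thick i)
  · simpa using fun i => (ht_mem i).2
  · have := condEntropy_lt t ht.measurableSet ht.aedisjoint ht_small
    exact (dynEnt_le_add_condEntropy hf ht hQt hs hPs).trans (by gcongr)

end Approximation

end MMD

theorem stmt8_general {X : Type*} [PseudoMetricSpace X] [BoundedSpace X] [MeasurableSpace X]
    [BorelSpace X] {μ : Measure X} [IsProbabilityMeasure μ] {f : X → X}
    (hf : MeasurePreserving f μ μ) (ε : ℝ) :
    sInf (dynEnt μ f '' {P : Finset (Set X) | IsPartition μ P ∧ partDiamLt P ε ∧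
        μ (⋃ A ∈ P, frontier A) = 0}) =
      sInf (dynEnt μ f '' {P : Finset (Set X) | IsPartition μ P ∧ partDiamLt P ε}) := by
  set S := {P : Finset (Set X) | IsPartition μ P ∧ partDiamLt P ε ∧ μ (⋃ A ∈ P, frontier A) = 0}
  set T := {P : Finset (Set X) | IsPartition μ P ∧ partDiamLt P ε}
  have hST : S ⊆ T := fun P hP => ⟨hP.1, hP.2.1⟩
  have approx (P) (hP : P ∈ T) {c : ℝ} (hc : 0 < c) : ∃ Q ∈ S, dynEnt μ f Q ≤ dynEnt μ f P + c := by
    obtain ⟨Q, hQ, hQε, hQ0, hle⟩ := exists_null_frontier_dynEnt_le_add hf hP.1 hP.2 hc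
    exact ⟨Q, ⟨hQ, hQε, hQ0⟩, hle⟩
  have hbdd (U : Set (Finset (Set X))) : BddBelow (dynEnt μ f '' U) :=
    ⟨0, forall_mem_image.2 fun P _ => dynEnt_nonneg f P⟩
  rcases T.eq_empty_or_nonempty with hT | ⟨P, hP⟩
  · have hS : S = ∅ := subset_empty_iff.1 (hST.trans hT.subset)
    rw [hT, hS]
  obtain ⟨Q, hQ, -⟩ := approx P hP one_pos
  refine le_antisymm (le_csInf ⟨_, mem_image_of_mem _ hP⟩ (forall_mem_image.2 fun P hP => ?_))
    (csInf_le_csInf (hbdd T) ⟨_, mem_image_of_mem _ hQ⟩ (image_mono hST))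
  refine le_of_forall_pos_le_add fun c hc => ?_
  obtain ⟨Q, hQ, hle⟩ := approx P hP hc
  exact (csInf_le (hbdd S) (mem_image_of_mem _ hQ)).trans hle

theorem stmt8 {X : Type*} [MetricSpace X] [CompactSpace X] [Nonempty X]
    [MeasurableSpace X] [BorelSpace X]
    (f : X → X) (hf : Continuous f) (μ : ProbabilityMeasure X) (hμ : InvariantProb f μ)
    (ε : ℝ) (hε : 0 < ε) :
    sInf (dynEnt (μ : Measure X) f '' {P : Finset (Set X) | IsPartition (μ : Measure X) P ∧
        partDiamLt P ε ∧ (μ : Measure X) (⋃ A ∈ P, frontier A) = 0}) =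
    sInf (dynEnt (μ : Measure X) f '' {P : Finset (Set X) | IsPartition (μ : Measure X) P ∧
        partDiamLt P ε}) :=
  stmt8_general ⟨hf.measurable, hμ⟩ ε

end
end

section
/- Let (X,d) be a compact metric space, f: X → X a continuous map, and ε > 0. For each n ∈ ℕ let E_n be a nonempty finite (n,ε)-separated subset of X and set ν_n = (1/(n·#E_n)) Σ_{x∈E_n} Σ_{k=0}^{n-1} δ_{f^k x}. If ν_n converges in the weak* topology to a measure μ (which is then f-invariant), then limsup_{n→∞} (1/n) ln #E_n ≤ inf_{ξ: diam ξ < ε} h_μ(f,ξ), where the infimum is over all finite measurable partitions ξ of X with diam ξ < ε. -/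
open MeasureTheory Filter Set Topology
open scoped ENNReal NNReal

open MMD MeasureTheory Filter Set Topology
open scoped ENNReal NNReal

noncomputable section

/-!
The proof is a coding argument. Cut the `ξ`-names of the points of `E_n` into blocks of length `q`
and weight each word of length `q` by (nearly) the `μ`-measure of its cylinder. As `E_n` injects
into names, Gibbs' inequality bounds `#E_n * log #E_n` by the total code length `-log p` of the
blocks; averaging over the `q` possible phases turns this into
`(1/n) log #E_n ≤ (1/q) ∫ ψ dν_n + M/n` for any `ψ` above the code length, where `M` bounds the code
length of a single block.

To pass to the weak limit `ψ` must be continuous. The elements of `ξ` are replaced by disjoint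
closed subsets of almost full measure, thickened to disjoint open sets of diameter at most `ε`, and
the rest of the space is coded by a fixed finite partition of diameter at most `ε`: the new names
still separate `E_n`, while the code length has a continuous majorant with integral at most
`H_μ(ξ^q) + η`. Letting `n → ∞`, then `η → 0` and `q → ∞`, gives the bound by `h_μ(f, ξ)`.
-/

namespace MMD

open scoped Function

section Gibbs

variable {Ω : Type*}

lemma sum_negMulLog_le_sum_mul_neg_log_add (s : Finset Ω) {a b : Ω → ℝ}
    (ha : ∀ w ∈ s, 0 ≤ a w) (hb : ∀ w ∈ s, 0 < b w) :
    ∑ w ∈ s, Real.negMulLog (a w) ≤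
      ∑ w ∈ s, a w * -Real.log (b w) + (∑ w ∈ s, b w - ∑ w ∈ s, a w) := by
  rw [← Finset.sum_sub_distrib, ← Finset.sum_add_distrib]
  refine Finset.sum_le_sum fun w hw => ?_
  rcases (ha w hw).eq_or_lt with h0 | hpos
  · simpa [← h0] using (hb w hw).le
  · have hlog := Real.log_le_sub_one_of_pos (div_pos (hb w hw) hpos)
    rw [Real.log_div (hb w hw).ne' hpos.ne'] at hlog
    calc Real.negMulLog (a w)
        = a w * -Real.log (b w) + a w * (Real.log (b w) - Real.log (a w)) := by
          rw [Real.negMulLog]; ring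
      _ ≤ a w * -Real.log (b w) + a w * (b w / a w - 1) := by gcongr
      _ = a w * -Real.log (b w) + (b w - a w) := by field_simp

lemma sum_negMulLog_le_log_card_add_one [Fintype Ω] {a : Ω → ℝ} (ha : ∀ w, 0 ≤ a w)
    (hsum : ∑ w, a w ≤ 1) :
    ∑ w, Real.negMulLog (a w) ≤ Real.log (Fintype.card Ω) + 1 := by
  rcases isEmpty_or_nonempty Ω with hΩ | hΩ
  · simp
  have hcard : (0 : ℝ) < Fintype.card Ω := by exact_mod_cast Fintype.card_pos
  have hgibbs := sum_negMulLog_le_sum_mul_neg_log_add Finset.univ (a := a)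
    (b := fun _ => (Fintype.card Ω : ℝ)⁻¹) (fun w _ => ha w) (fun _ _ => inv_pos.2 hcard)
  have hle : (∑ w, a w) * Real.log (Fintype.card Ω) ≤ Real.log (Fintype.card Ω) :=
    mul_le_of_le_one_left (Real.log_natCast_nonneg _) hsum
  simp only [Real.log_inv, neg_neg, ← Finset.sum_mul, Finset.sum_const, Finset.card_univ,
    nsmul_eq_mul, mul_inv_cancel₀ hcard.ne'] at hgibbs
  linarith [Finset.sum_nonneg fun w (_ : w ∈ Finset.univ) => ha w]

lemma card_mul_log_card_le_sum_neg_log_of_injOn {α : Type*} [Fintype Ω] {E : Finset α}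
    {φ : α → Ω} (hφ : InjOn φ E) {p : Ω → ℝ} (hp : ∀ w, 0 < p w) (hsum : ∑ w, p w ≤ 1) :
    (E.card : ℝ) * Real.log E.card ≤ ∑ x ∈ E, -Real.log (p (φ x)) := by
  classical
  rcases E.eq_empty_or_nonempty with rfl | hE
  · simp
  have hcard : (0 : ℝ) < E.card := by exact_mod_cast hE.card_pos
  have himage : ∑ x ∈ E, p (φ x) ≤ 1 := by
    rw [← Finset.sum_image (f := p) hφ]
    exact (Finset.sum_le_univ_sum_of_nonneg fun w => (hp w).le).trans hsum
  have hgibbs := sum_negMulLog_le_sum_mul_neg_log_add E (a := fun _ => (E.card : ℝ)⁻¹)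
    (b := fun x => p (φ x)) (fun _ _ => (inv_pos.2 hcard).le) (fun _ _ => hp _)
  simp only [Real.negMulLog, Real.log_inv, ← Finset.mul_sum, Finset.sum_const, nsmul_eq_mul,
    mul_inv_cancel₀ hcard.ne', neg_mul_neg, inv_mul_cancel_left₀ hcard.ne'] at hgibbs
  rw [← le_inv_mul_iff₀ hcard]
  linarith

lemma neg_log_nonneg_of_sum_le_one [Fintype Ω] {p : Ω → ℝ} (hp : ∀ w, 0 < p w)
    (hsum : ∑ w, p w ≤ 1) (w : Ω) : 0 ≤ -Real.log (p w) :=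
  neg_nonneg.2 <| Real.log_nonpos (hp w).le <|
    (Finset.single_le_sum (fun v _ => (hp v).le) (Finset.mem_univ w)).trans hsum

lemma exists_pos_weight_sum_mul_neg_log_le [Fintype Ω] {a : Ω → ℝ} (ha : ∀ w, 0 ≤ a w)
    (hsum : ∑ w, a w ≤ 1) {η : ℝ} (hη : 0 < η) :
    ∃ p : Ω → ℝ, (∀ w, 0 < p w) ∧ ∑ w, p w ≤ 1 ∧
      ∑ w, a w * -Real.log (p w) ≤ ∑ w, Real.negMulLog (a w) + η := by
  rcases isEmpty_or_nonempty Ω with hΩ | hΩ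
  · exact ⟨a, isEmptyElim, hsum, by simpa using hη.le⟩
  have hcard : (0 : ℝ) < Fintype.card Ω := by exact_mod_cast Fintype.card_pos
  have hpos (w : Ω) : 0 < a w + η / Fintype.card Ω :=
    add_pos_of_nonneg_of_pos (ha w) (by positivity)
  refine ⟨fun w => Real.exp (-η) * (a w + η / Fintype.card Ω),
    fun w => mul_pos (Real.exp_pos _) (hpos w), ?_, ?_⟩
  · calc ∑ w, Real.exp (-η) * (a w + η / Fintype.card Ω)
        = Real.exp (-η) * (∑ w, a w + η) := by
          rw [← Finset.mul_sum, Finset.sum_add_distrib, Finset.sum_const, Finset.card_univ,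
            nsmul_eq_mul, mul_div_cancel₀ _ hcard.ne']
      _ ≤ Real.exp (-η) * Real.exp η := by
          gcongr
          linarith [Real.add_one_le_exp η]
      _ = 1 := by rw [← Real.exp_add, neg_add_cancel, Real.exp_zero]
  · have hterm (w : Ω) : a w * -Real.log (Real.exp (-η) * (a w + η / Fintype.card Ω)) ≤
        Real.negMulLog (a w) + a w * η := by
      rw [Real.log_mul (Real.exp_pos _).ne' (hpos w).ne', Real.log_exp, Real.negMulLog]
      rcases (ha w).eq_or_lt with h0 | hw
      · simp [← h0]
      · have hlog : Real.log (a w) ≤ Real.log (a w + η / Fintype.card Ω) :=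
          Real.log_le_log hw (le_add_of_nonneg_right (by positivity))
        linarith [mul_le_mul_of_nonneg_left hlog hw.le]
    refine (Finset.sum_le_sum fun w _ => hterm w).trans ?_
    rw [Finset.sum_add_distrib, ← Finset.sum_mul]
    linarith [mul_le_of_le_one_left hη.le hsum]

end Gibbs

section Itinerary

variable {X ι : Type*} {f : X → X} {ζ : X → ι} {n q : ℕ} {E : Finset X}

/-- The `ζ`-name of length `q` of the point `x`: the labels, under the coding `ζ`, of the first `q`
points of its `f`-orbit. -/
def itinerary (f : X → X) (ζ : X → ι) (q : ℕ) (x : X) : Fin q → ι :=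
  fun j => ζ (f^[j] x)

/-- The ideal (Shannon) code length, in nats, of the `ζ`-name of length `q` of `x` when words are
weighted by `p`. It is meant for positive weights of total mass at most `1`. -/
def codeLength (f : X → X) (ζ : X → ι) (p : (Fin q → ι) → ℝ) (x : X) : ℝ :=
  -Real.log (p (itinerary f ζ q x))

lemma injOn_itinerary_blocks {S : Finset ℕ} (hE : InjOn (itinerary f ζ n) E)
    (hS : ∀ i < n, ∃ s ∈ S, s ≤ i ∧ i < s + q) :
    InjOn (fun x (s : S) => itinerary f ζ q (f^[s] x)) E := by
  intro x hx y hy hxy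
  refine hE hx hy (funext fun i => ?_)
  obtain ⟨s, hs, hsi, his⟩ := hS i i.2
  have hblock := congrFun (congrFun hxy ⟨s, hs⟩) ⟨i - s, by omega⟩
  simpa only [itinerary, ← Function.iterate_add_apply, Nat.sub_add_cancel hsi] using hblock

lemma injOn_itinerary_of_pairwise_lt_dist [PseudoMetricSpace X] {ε : ℝ}
    (hζ : ∀ x y, ζ x = ζ y → dist x y ≤ ε) {E : Set X}
    (hE : E.Pairwise fun x y => ∃ i < n, ε < dist (f^[i] x) (f^[i] y)) :
    InjOn (itinerary f ζ n) E := by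
  intro x hx y hy hxy
  by_contra hne
  obtain ⟨i, hi, hlt⟩ := hE hx hy hne
  exact (hζ _ _ (congrFun hxy ⟨i, hi⟩)).not_gt hlt

variable [Fintype ι] {p : (Fin q → ι) → ℝ}

lemma card_mul_log_card_le_sum_codeLength (hp : ∀ w, 0 < p w) (hsum : ∑ w, p w ≤ 1)
    (hE : InjOn (itinerary f ζ n) E) {S : Finset ℕ}
    (hS : ∀ i < n, ∃ s ∈ S, s ≤ i ∧ i < s + q) :
    (E.card : ℝ) * Real.log E.card ≤ ∑ x ∈ E, ∑ s ∈ S, codeLength f ζ p (f^[s] x) := by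
  have hprod : ∑ w : S → Fin q → ι, ∏ s, p (w s) ≤ 1 := by
    rw [← Fintype.prod_sum fun (_ : S) w => p w, Finset.prod_const]
    exact pow_le_one₀ (Finset.sum_nonneg fun w _ => (hp w).le) hsum
  refine (card_mul_log_card_le_sum_neg_log_of_injOn (injOn_itinerary_blocks hE hS)
    (p := fun w => ∏ s, p (w s)) (fun w => Finset.prod_pos fun s _ => hp _) hprod).trans_eq ?_
  refine Finset.sum_congr rfl fun x _ => ?_
  rw [Real.log_prod fun s _ => (hp _).ne', ← Finset.sum_neg_distrib,
    ← Finset.sum_coe_sort S fun s => codeLength f ζ p (f^[s] x)]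
  rfl

lemma exists_blockStart_of_residue {i r : ℕ} (hr : r < q) (hi : i < n) :
    ∃ s ∈ insert 0 {j ∈ Finset.range n | j % q = r}, s ≤ i ∧ i < s + q := by
  rcases lt_or_ge i r with hir | hri
  · exact ⟨0, Finset.mem_insert_self _ _, Nat.zero_le i, by omega⟩
  · have hmod := Nat.mod_lt (i - r) (Nat.zero_lt_of_lt hr)
    have hdiv := Nat.mod_add_div (i - r) q
    refine ⟨r + q * ((i - r) / q), ?_, by omega, by omega⟩
    simp only [Finset.mem_insert, Finset.mem_filter, Finset.mem_range]
    exact Or.inr ⟨by omega, by rw [Nat.add_mul_mod_self_left, Nat.mod_eq_of_lt hr]⟩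

-- Apply `card_mul_log_card_le_sum_codeLength` with `S = {0} ∪ {j < n | j ≡ r mod q}` and sum over
-- the `q` residues `r`: every starting time `j < n` is used exactly once, and each phase pays at
-- most `M` for the extra `0`.
lemma mul_card_mul_log_card_le_sum_codeLength (hp : ∀ w, 0 < p w) (hsum : ∑ w, p w ≤ 1)
    {M : ℝ} (hM : ∀ w, -Real.log (p w) ≤ M) (hq : 0 < q)
    (hE : InjOn (itinerary f ζ n) E) :
    (q : ℝ) * (E.card * Real.log E.card) ≤
      ∑ x ∈ E, (∑ j ∈ Finset.range n, codeLength f ζ p (f^[j] x) + q * M) := by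
  have hinsert (x : X) (r : ℕ) :
      ∑ s ∈ insert 0 {j ∈ Finset.range n | j % q = r}, codeLength f ζ p (f^[s] x) ≤
        ∑ j ∈ Finset.range n with j % q = r, codeLength f ζ p (f^[j] x) + M := by
    by_cases h0 : 0 ∉ {j ∈ Finset.range n | j % q = r}
    · rw [Finset.sum_insert h0, add_comm]
      gcongr
      exact hM _
    · rw [Finset.insert_eq_of_mem (not_not.1 h0)]
      exact le_add_of_nonneg_right
        ((neg_log_nonneg_of_sum_le_one hp hsum (itinerary f ζ q x)).trans (hM _))
  calc (q : ℝ) * (E.card * Real.log E.card)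
      = ∑ _ ∈ Finset.range q, (E.card : ℝ) * Real.log E.card := by simp
    _ ≤ ∑ r ∈ Finset.range q, ∑ x ∈ E,
          (∑ j ∈ Finset.range n with j % q = r, codeLength f ζ p (f^[j] x) + M) := by
        refine Finset.sum_le_sum fun r hr => ?_
        refine (card_mul_log_card_le_sum_codeLength hp hsum hE fun i hi =>
          exists_blockStart_of_residue (Finset.mem_range.1 hr) hi).trans ?_
        exact Finset.sum_le_sum fun x _ => hinsert x r
    _ = ∑ x ∈ E, (∑ j ∈ Finset.range n, codeLength f ζ p (f^[j] x) + q * M) := by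
        rw [Finset.sum_comm]
        refine Finset.sum_congr rfl fun x _ => ?_
        rw [Finset.sum_add_distrib, Finset.sum_const, Finset.card_range, nsmul_eq_mul,
          Finset.sum_fiberwise_of_maps_to fun j _ => Finset.mem_range.2 (Nat.mod_lt j hq)]

end Itinerary

section OrbitCylinder

variable {X κ : Type*} {f : X → X} {q : ℕ}

/-- The points whose first `q` iterates visit the sets `A (w 0), …, A (w (q - 1))` in this order:
the element of the `q`-fold dynamical join of the family `A` indexed by the word `w`. -/
def orbitCylinder (f : X → X) (A : κ → Set X) (w : Fin q → κ) : Set X :=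
  ⋂ j : Fin q, f^[j] ⁻¹' A (w j)

lemma orbitCylinder_mono {A B : κ → Set X} (h : ∀ i, A i ⊆ B i) (w : Fin q → κ) :
    orbitCylinder f A w ⊆ orbitCylinder f B w :=
  iInter_mono fun j => preimage_mono (h (w j))

lemma orbitCylinder_cons {n : ℕ} (A : κ → Set X) (i : κ) (w : Fin n → κ) :
    orbitCylinder f A (Fin.cons i w : Fin (n + 1) → κ) = A i ∩ f ⁻¹' orbitCylinder f A w := by
  ext x
  simp [orbitCylinder, Fin.forall_fin_succ]

lemma orbitCylinder_fiber {ι : Type*} (ζ : X → ι) (w : Fin q → ι) :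
    orbitCylinder f (fun i => ζ ⁻¹' {i}) w = itinerary f ζ q ⁻¹' {w} := by
  ext x
  simp [orbitCylinder, itinerary, funext_iff]

lemma isClosed_orbitCylinder [TopologicalSpace X] (hf : Continuous f) {A : κ → Set X}
    (hA : ∀ i, IsClosed (A i)) (w : Fin q → κ) : IsClosed (orbitCylinder f A w) :=
  isClosed_iInter fun j => (hA (w j)).preimage (hf.iterate j)

lemma orbitCylinder_interior_subset [TopologicalSpace X] (hf : Continuous f) (A : κ → Set X)
    (w : Fin q → κ) :
    orbitCylinder f (fun i => interior (A i)) w ⊆ interior (orbitCylinder f A w) :=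
  interior_maximal (orbitCylinder_mono (fun _ => interior_subset) w)
    (isOpen_iInter_of_finite fun j => isOpen_interior.preimage (hf.iterate j))

variable [MeasurableSpace X] {μ : Measure X} {A : κ → Set X}

lemma measurableSet_orbitCylinder (hf : Measurable f) (hA : ∀ i, MeasurableSet (A i))
    (w : Fin q → κ) : MeasurableSet (orbitCylinder f A w) :=
  MeasurableSet.iInter fun j => hf.iterate j (hA (w j))

lemma pairwise_aedisjoint_orbitCylinder (hf : MeasurePreserving f μ μ)
    (hA : Pairwise (AEDisjoint μ on A)) :
    Pairwise (AEDisjoint μ on fun w : Fin q → κ => orbitCylinder f A w) := by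
  intro v w hvw
  obtain ⟨j, hj⟩ := Function.ne_iff.1 hvw
  exact ((hA hj).preimage (hf.iterate j).quasiMeasurePreserving).mono
    (iInter_subset _ j) (iInter_subset _ j)

lemma sum_measureReal_orbitCylinder_le_one [Fintype κ] [IsProbabilityMeasure μ]
    (hf : MeasurePreserving f μ μ) (hAm : ∀ i, MeasurableSet (A i))
    (hA : Pairwise (AEDisjoint μ on A)) :
    ∑ w : Fin q → κ, μ.real (orbitCylinder f A w) ≤ 1 := by
  rw [← measureReal_biUnion_finset₀
    ((pairwise_aedisjoint_orbitCylinder hf hA).set_pairwise _)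
    fun w _ => (measurableSet_orbitCylinder hf.measurable hAm w).nullMeasurableSet]
  exact measureReal_le_one

lemma measureReal_compl_iUnion_orbitCylinder_le [Countable κ] [IsFiniteMeasure μ]
    (hf : MeasurePreserving f μ μ) (hA : ∀ i, MeasurableSet (A i)) :
    μ.real (⋃ w : Fin q → κ, orbitCylinder f A w)ᶜ ≤ q * μ.real (⋃ i, A i)ᶜ := by
  have hcover : (⋃ w : Fin q → κ, orbitCylinder f A w)ᶜ ⊆
      ⋃ j : Fin q, f^[j] ⁻¹' (⋃ i, A i)ᶜ := by
    intro x hx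
    by_contra hmem
    have hvisits (j : Fin q) : ∃ i, f^[j] x ∈ A i := by
      simpa using fun hj => hmem (mem_iUnion.2 ⟨j, hj⟩)
    choose w hw using hvisits
    exact hx (mem_iUnion.2 ⟨w, mem_iInter.2 hw⟩)
  have hpre (j : Fin q) : μ.real (f^[j] ⁻¹' (⋃ i, A i)ᶜ) = μ.real (⋃ i, A i)ᶜ :=
    (hf.iterate j).measureReal_preimage (MeasurableSet.iUnion hA).compl.nullMeasurableSet
  calc μ.real (⋃ w : Fin q → κ, orbitCylinder f A w)ᶜ
      ≤ ∑ j : Fin q, μ.real (f^[j] ⁻¹' (⋃ i, A i)ᶜ) :=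
        (measureReal_mono hcover).trans (measureReal_iUnion_fintype_le _)
    _ = q * μ.real (⋃ i, A i)ᶜ := by
        simp only [hpre, Finset.sum_const, Finset.card_univ, Fintype.card_fin, nsmul_eq_mul]

lemma sum_orbitCylinder_sumElim_empty {τ : Type*} [Fintype κ] [Fintype τ] {F : ℝ → ℝ}
    (hF : F 0 = 0) :
    ∑ w : Fin q → κ ⊕ τ, F (μ.real (orbitCylinder f (Sum.elim A fun _ => ∅) w)) =
      ∑ w : Fin q → κ, F (μ.real (orbitCylinder f A w)) := by
  refine (Fintype.sum_of_injective (fun w : Fin q → κ => Sum.inl ∘ w)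
    (fun v w h => Sum.inl_injective.comp_left h) _ _ (fun w hw => ?_) fun w => rfl).symm
  obtain ⟨j, hj⟩ : ∃ j, (w j).isRight := by
    by_contra! hleft
    choose v hv using fun j => Sum.isLeft_iff.1 (Sum.not_isRight.1 (hleft j))
    exact hw ⟨v, funext fun j => (hv j).symm⟩
  obtain ⟨t, ht⟩ := Sum.isRight_iff.1 hj
  have hempty : orbitCylinder f (Sum.elim A fun _ => ∅) w = ∅ :=
    subset_empty_iff.1 ((iInter_subset _ j).trans (by simp [ht]))
  rw [hempty, measureReal_empty, hF]

end OrbitCylinder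

section Entropy

variable {X : Type*} {f : X → X} {P : Finset (Set X)}

lemma dynJoin_eq_image_orbitCylinder [DecidableEq (Set X)] (f : X → X) (P : Finset (Set X))
    (n : ℕ) :
    dynJoin f P n =
      Finset.univ.image fun w : Fin n → P => orbitCylinder f (fun A : P => (A : Set X)) w := by
  induction n with
  | zero =>
    ext B
    simp [dynJoin, orbitCylinder]
  | succ n ih =>
    ext B
    simp only [dynJoin, joinParts, ih, Finset.mem_image, Finset.mem_product, Finset.mem_univ,
      true_and, Prod.exists]
    constructor
    · rintro ⟨A, _, ⟨hA, _, ⟨w, rfl⟩, rfl⟩, rfl⟩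
      exact ⟨Fin.cons ⟨A, hA⟩ w, orbitCylinder_cons _ _ _⟩
    · rintro ⟨w, rfl⟩
      refine ⟨w 0, _, ⟨(w 0).2, _, ⟨Fin.tail w, rfl⟩, rfl⟩, ?_⟩
      rw [← orbitCylinder_cons (fun A : P => (A : Set X)), Fin.cons_self_tail]

variable [MeasurableSpace X] {μ : Measure X}

lemma IsPartition.pairwise_aedisjoint (hP : IsPartition μ P) :
    Pairwise (AEDisjoint μ on fun A : P => (A : Set X)) :=
  fun A B hAB => hP.2.2 A A.2 B B.2 (Subtype.coe_ne_coe.2 hAB)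

lemma partEnt_dynJoin (hf : MeasurePreserving f μ μ) (hP : IsPartition μ P) (q : ℕ) :
    partEnt μ (dynJoin f P q) = ∑ w : Fin q → P,
      Real.negMulLog (μ.real (orbitCylinder f (fun A : P => (A : Set X)) w)) := by
  classical
  rw [dynJoin_eq_image_orbitCylinder, partEnt, Finset.sum_image_of_pairwise_eq_zero]
  · rfl
  · intro v _ w _ hvw heq
    have hnull := pairwise_aedisjoint_orbitCylinder hf hP.pairwise_aedisjoint hvw
    simp only [Function.onFun, heq, AEDisjoint, inter_self] at hnull
    simp [heq, hnull]

lemma partEnt_dynJoin_le [IsProbabilityMeasure μ] (hf : MeasurePreserving f μ μ)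
    (hP : IsPartition μ P) (q : ℕ) :
    partEnt μ (dynJoin f P q) ≤ q * Real.log P.card + 1 := by
  rw [partEnt_dynJoin hf hP]
  refine (sum_negMulLog_le_log_card_add_one (fun _ => measureReal_nonneg)
    (sum_measureReal_orbitCylinder_le_one hf (fun A : P => hP.1 A A.2)
      hP.pairwise_aedisjoint)).trans_eq ?_
  simp

lemma isBoundedUnder_partEnt_dynJoin_div [IsProbabilityMeasure μ] (hf : MeasurePreserving f μ μ)
    (hP : IsPartition μ P) :
    IsBoundedUnder (· ≤ ·) atTop fun q : ℕ => partEnt μ (dynJoin f P q) / q := by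
  refine isBoundedUnder_of_eventually_le (a := Real.log P.card + 1) ?_
  filter_upwards [eventually_ge_atTop 1] with q hq
  have hq1 : (1 : ℝ) ≤ q := by exact_mod_cast hq
  rw [div_le_iff₀ (by linarith)]
  linarith [partEnt_dynJoin_le hf hP q]

end Entropy

section Approximation

variable {X : Type*}

lemma exists_continuousMap_ge_comp_eqOn_isClosed {Ω : Type*} [Finite Ω] [TopologicalSpace X]
    [NormalSpace X] {φ : X → Ω} {L : Ω → Set X} (hL : ∀ w, IsClosed (L w))
    (hLφ : ∀ w, L w ⊆ interior (φ ⁻¹' {w})) {g : Ω → ℝ} {M : ℝ} (hgM : ∀ w, g w ≤ M) :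
    ∃ ψ : C(X, ℝ), (∀ x, g (φ x) ≤ ψ x) ∧ (∀ x, ψ x ≤ M) ∧ ∀ w, ∀ x ∈ L w, ψ x = g w := by
  cases nonempty_fintype Ω
  have hbump (w : Ω) : ∃ χ : C(X, ℝ), EqOn χ 0 (interior (φ ⁻¹' {w}))ᶜ ∧ EqOn χ 1 (L w) ∧
      ∀ x, χ x ∈ Icc (0 : ℝ) 1 :=
    exists_continuous_zero_one_of_isClosed isOpen_interior.isClosed_compl (hL w)
      (disjoint_compl_left_iff_subset.2 (hLφ w))
  choose χ hχ0 hχ1 hχ01 using hbump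
  let ψ : C(X, ℝ) := ⟨fun x => M + ∑ w, (g w - M) * χ w x, by fun_prop⟩
  have hψ (x : X) : ψ x = M + (g (φ x) - M) * χ (φ x) x := by
    refine congrArg (M + ·) (Fintype.sum_eq_single (φ x) fun w hw => ?_)
    rw [hχ0 w fun hx => hw (interior_subset hx).symm, Pi.zero_apply, mul_zero]
  refine ⟨ψ, fun x => ?_, fun x => ?_, fun w x hx => ?_⟩
  · rw [hψ]
    nlinarith [hgM (φ x), (hχ01 (φ x) x).2]
  · rw [hψ]
    nlinarith [hgM (φ x), (hχ01 (φ x) x).1]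
  · have hφx : x ∈ φ ⁻¹' {w} := interior_subset (hLφ w hx)
    rw [hψ, mem_singleton_iff.1 hφx, hχ1 w hx, Pi.one_apply]
    ring

variable [MeasurableSpace X] {μ : Measure X}

lemma integral_le_sum_mul_measureReal_add {Ω : Type*} [Fintype Ω] [IsFiniteMeasure μ]
    {L : Ω → Set X} (hLm : ∀ w, MeasurableSet (L w)) (hLd : Pairwise (Disjoint on L))
    {ψ : X → ℝ} (hψ : Integrable ψ μ) {g : Ω → ℝ} (hψL : ∀ w, ∀ x ∈ L w, ψ x = g w)
    {M : ℝ} (hψM : ∀ x, ψ x ≤ M) :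
    ∫ x, ψ x ∂μ ≤ ∑ w, μ.real (L w) * g w + M * μ.real (⋃ w, L w)ᶜ := by
  have hUm : MeasurableSet (⋃ w, L w) := MeasurableSet.iUnion hLm
  rw [← integral_add_compl hUm hψ,
    integral_iUnion_fintype hLm hLd fun w => hψ.integrableOn]
  refine add_le_add (Finset.sum_le_sum fun w _ => ?_) ?_
  · rw [setIntegral_congr_fun (hLm w) (hψL w), setIntegral_const, smul_eq_mul]
  · calc ∫ x in (⋃ w, L w)ᶜ, ψ x ∂μ ≤ ∫ _ in (⋃ w, L w)ᶜ, M ∂μ :=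
          integral_mono hψ.integrableOn (integrable_const M) hψM
      _ = M * μ.real (⋃ w, L w)ᶜ := by rw [setIntegral_const, smul_eq_mul, mul_comm]

lemma exists_isClosed_pairwise_disjoint_subset {κ : Type*} [Finite κ] [TopologicalSpace X]
    [OpensMeasurableSpace X] [IsFiniteMeasure μ] [μ.WeaklyRegular] {A : κ → Set X}
    (hAm : ∀ i, MeasurableSet (A i)) (hAd : Pairwise (AEDisjoint μ on A))
    (hcover : μ (⋃ i, A i)ᶜ = 0) {δ : ℝ} (hδ : 0 < δ) :
    ∃ K : κ → Set X, (∀ i, IsClosed (K i)) ∧ (∀ i, K i ⊆ A i) ∧ Pairwise (Disjoint on K) ∧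
      μ.real (⋃ i, K i)ᶜ ≤ δ := by
  obtain ⟨N, hNm, hN0, hNd⟩ := exists_null_pairwise_disjoint_sdiff hAd
  obtain ⟨δ', hδ'0, hδ'⟩ := ENNReal.exists_pos_sum_of_countable' (ENNReal.ofReal_pos.2 hδ).ne' κ
  have hinner (i : κ) := ((hAm i).diff (hNm i)).exists_isClosed_sdiff_lt (μ := μ)
    (measure_ne_top μ _) (hδ'0 i).ne'
  choose K hKA hKc hKμ using hinner
  refine ⟨K, hKc, fun i => (hKA i).trans sdiff_subset,
    fun i j hij => (hNd hij).mono (hKA i) (hKA j), ENNReal.toReal_le_of_le_ofReal hδ.le ?_⟩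
  have hsplit : (⋃ i, K i)ᶜ ⊆ ((⋃ i, A i)ᶜ ∪ ⋃ i, N i) ∪ ⋃ i, (A i \ N i) \ K i := by
    intro x hx
    simp only [mem_compl_iff, mem_iUnion, mem_union, Set.mem_sdiff, not_exists] at hx ⊢
    by_contra! h
    obtain ⟨⟨⟨i, hi⟩, hN⟩, hK⟩ := h
    exact hx i (hK i ⟨hi, hN i⟩)
  have hnull : μ ((⋃ i, A i)ᶜ ∪ ⋃ i, N i) = 0 :=
    measure_union_null hcover (measure_iUnion_null hN0)
  calc μ (⋃ i, K i)ᶜ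
      ≤ μ ((⋃ i, A i)ᶜ ∪ ⋃ i, N i) + μ (⋃ i, (A i \ N i) \ K i) :=
        (measure_mono hsplit).trans (measure_union_le _ _)
    _ ≤ ∑' i, μ ((A i \ N i) \ K i) := by
        rw [hnull, zero_add]
        exact measure_iUnion_le _
    _ ≤ ∑' i, δ' i := ENNReal.tsum_le_tsum fun i => (hKμ i).le
    _ ≤ ENNReal.ofReal δ := hδ'.le

end Approximation

section Coding

variable {X : Type*}

lemma exists_extend_labelling {κ τ : Type*} {V : κ → Set X} (hV : Pairwise (Disjoint on V))
    (c : X → τ) :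
    ∃ ζ : X → κ ⊕ τ, (∀ i, ζ ⁻¹' {Sum.inl i} = V i) ∧ ∀ j, ζ ⁻¹' {Sum.inr j} ⊆ c ⁻¹' {j} := by
  classical
  refine ⟨fun x => if h : ∃ i, x ∈ V i then Sum.inl h.choose else Sum.inr (c x), fun i => ?_,
    fun j x hx => ?_⟩
  · ext x
    by_cases h : ∃ i, x ∈ V i
    · simp only [mem_preimage, mem_singleton_iff, dif_pos h, Sum.inl.injEq]
      refine ⟨fun hi => hi ▸ h.choose_spec, fun hx => ?_⟩
      by_contra hne
      exact disjoint_left.1 (hV hne) h.choose_spec hx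
    · simpa [h] using not_exists.1 h i
  · by_cases h : ∃ i, x ∈ V i
    · simp [h] at hx
    · simpa [h] using hx

variable [PseudoMetricSpace X]

lemma exists_disjoint_thickening_diam_le [CompactSpace X] {κ : Type*} [Finite κ] {K : κ → Set X}
    (hK : ∀ i, IsClosed (K i)) (hKd : Pairwise (Disjoint on K)) {ε : ℝ}
    (hdiam : ∀ i, Metric.diam (K i) < ε) :
    ∃ ρ > 0, Pairwise (Disjoint on fun i => Metric.thickening ρ (K i)) ∧
      ∀ i, Metric.diam (Metric.thickening ρ (K i)) ≤ ε := by
  have hdisj : ∀ᶠ ρ in 𝓝[>] (0 : ℝ), Pairwise (Disjoint on fun i => Metric.thickening ρ (K i)) := by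
    simp only [Pairwise, eventually_all, Function.onFun]
    intro i j hij
    obtain ⟨δ, hδ, hδd⟩ := (hKd hij).exists_thickenings (hK i).isCompact (hK j)
    filter_upwards [Ioo_mem_nhdsGT hδ] with ρ hρ
    exact hδd.mono (Metric.thickening_mono hρ.2.le _) (Metric.thickening_mono hρ.2.le _)
  have hsmall : ∀ᶠ ρ in 𝓝[>] (0 : ℝ), ∀ i, Metric.diam (K i) + 2 * ρ < ε := by
    refine eventually_all.2 fun i => ?_
    filter_upwards [Ioo_mem_nhdsGT (half_pos (sub_pos.2 (hdiam i)))] with ρ hρ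
    linarith [hρ.2]
  obtain ⟨ρ, ⟨hd, hs⟩, hρ⟩ := ((hdisj.and hsmall).and self_mem_nhdsWithin).exists
  have hρ : 0 < ρ := hρ
  exact ⟨ρ, hρ, hd, fun i => (Metric.diam_thickening_le (K i) hρ.le).trans (hs i).le⟩

lemma exists_separating_coding [CompactSpace X] {κ τ : Type*} [Finite κ] {K : κ → Set X}
    (hK : ∀ i, IsClosed (K i)) (hKd : Pairwise (Disjoint on K)) {ε : ℝ}
    (hdiam : ∀ i, Metric.diam (K i) < ε) {c : X → τ} (hc : ∀ x y, c x = c y → dist x y ≤ ε) :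
    ∃ ζ : X → κ ⊕ τ, (∀ i, K i ⊆ interior (ζ ⁻¹' {Sum.inl i})) ∧
      ∀ x y, ζ x = ζ y → dist x y ≤ ε := by
  obtain ⟨ρ, hρ, hVd, hVdiam⟩ := exists_disjoint_thickening_diam_le hK hKd hdiam
  obtain ⟨ζ, hinl, hinr⟩ := exists_extend_labelling hVd c
  refine ⟨ζ, fun i => ?_, fun x y hxy => ?_⟩
  · rw [hinl, Metric.isOpen_thickening.interior_eq]
    exact Metric.self_subset_thickening hρ _
  · rcases hx : ζ x with i | j
    · have hxV : x ∈ Metric.thickening ρ (K i) := (hinl i).subset hx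
      have hyV : y ∈ Metric.thickening ρ (K i) := (hinl i).subset (hxy.symm.trans hx)
      exact (Metric.dist_le_diam_of_mem (isCompact_univ.isBounded.subset (subset_univ _))
        hxV hyV).trans (hVdiam i)
    · have hxj : c x = j := hinr j hx
      have hyj : c y = j := hinr j (hxy.symm.trans hx)
      exact hc x y (hxj.trans hyj.symm)

variable [CompactSpace X] [MeasurableSpace X] [OpensMeasurableSpace X]

lemma exists_simpleFunc_dist_lt {r : ℝ} (hr : 0 < r) :
    ∃ c : SimpleFunc X X, ∀ x, dist (c x) x < r := by
  rcases isEmpty_or_nonempty X with hX | hX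
  · exact ⟨SimpleFunc.ofIsEmpty, isEmptyElim⟩
  obtain ⟨e, he⟩ := TopologicalSpace.exists_dense_seq X
  have hcover : univ ⊆ ⋃ k, Metric.ball (e k) r := fun x _ => by
    obtain ⟨k, hk⟩ := he.exists_dist_lt x hr
    exact mem_iUnion.2 ⟨k, hk⟩
  obtain ⟨t, ht⟩ := isCompact_univ.elim_finite_subcover _ (fun _ => Metric.isOpen_ball) hcover
  refine ⟨SimpleFunc.nearestPt e (t.sup id), fun x => ?_⟩
  obtain ⟨k, hk, hxk⟩ := mem_iUnion₂.1 (ht (mem_univ x))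
  have hnear := SimpleFunc.edist_nearestPt_le e x (Finset.le_sup (f := id) hk)
  rw [edist_dist, edist_dist, ENNReal.ofReal_le_ofReal_iff dist_nonneg] at hnear
  exact hnear.trans_lt (Metric.mem_ball'.1 hxk)

lemma exists_simpleFunc_dist_lt_of_eq {r : ℝ} (hr : 0 < r) :
    ∃ c : SimpleFunc X X, ∀ x y, c x = c y → dist x y < r := by
  obtain ⟨c, hc⟩ := exists_simpleFunc_dist_lt (X := X) (half_pos hr)
  refine ⟨c, fun x y hxy => ?_⟩
  calc dist x y ≤ dist (c x) x + dist (c y) y := hxy ▸ dist_triangle_left x y (c x)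
    _ < r := by linarith [hc x, hc y]

lemma exists_isPartition_partDiamLt (μ : Measure X) {ε : ℝ} (hε : 0 < ε) :
    ∃ P : Finset (Set X), IsPartition μ P ∧ partDiamLt P ε := by
  classical
  obtain ⟨c, hc⟩ := exists_simpleFunc_dist_lt_of_eq (X := X) (half_pos hε)
  refine ⟨c.range.image fun y => c ⁻¹' {y}, ⟨?_, ?_, ?_⟩, ?_⟩
  · exact Finset.forall_mem_image.2 fun y _ => c.measurableSet_fiber y
  · convert measure_empty (μ := μ)
    refine sdiff_eq_empty.2 fun x _ => ?_
    simp
  · simp only [Finset.forall_mem_image]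
    intro y _ z _ hyz
    have hne : y ≠ z := fun h => hyz (h ▸ rfl)
    rw [((disjoint_singleton.2 hne).preimage c).inter_eq, measure_empty]
  · refine Finset.forall_mem_image.2 fun y _ => ?_
    exact (Metric.diam_le_of_forall_dist_le (half_pos hε).le fun x hx x' hx' =>
      (hc x x' (hx.trans hx'.symm)).le).trans_lt (half_lt_self hε)

end Coding

section OrbitMeasure

variable {X : Type*} {f : X → X} [MeasurableSpace X]

/-- The average of the point masses along the orbit segments of length `n` that start in `E`, called
`ν_n` when `E = E_n`. It is a probability measure when `E` is nonempty and `0 < n`, and the zero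
measure otherwise. -/
def orbitMeasure (f : X → X) (E : Finset X) (n : ℕ) : Measure X :=
  ((n * E.card : ℕ) : ℝ≥0∞)⁻¹ • ∑ x ∈ E, ∑ k ∈ Finset.range n, Measure.dirac (f^[k] x)

lemma integral_orbitMeasure (E : Finset X) (n : ℕ) {ψ : X → ℝ} (hψ : StronglyMeasurable ψ) :
    ∫ x, ψ x ∂orbitMeasure f E n =
      ((n : ℝ) * E.card)⁻¹ * ∑ x ∈ E, ∑ k ∈ Finset.range n, ψ (f^[k] x) := by
  have hdirac (y : X) : Integrable ψ (Measure.dirac y) := integrable_dirac' hψ enorm_lt_top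
  have hsegment (x : X) : Integrable ψ (∑ k ∈ Finset.range n, Measure.dirac (f^[k] x)) :=
    integrable_finsetSum_measure.2 fun k _ => hdirac _
  rw [orbitMeasure, integral_smul_measure, integral_finsetSum_measure fun x _ => hsegment x]
  simp only [integral_finsetSum_measure fun _ _ => hdirac _, integral_dirac' _ _ hψ, smul_eq_mul,
    ENNReal.toReal_inv, ENNReal.toReal_natCast]
  rw [Nat.cast_mul]

lemma log_card_div_le_integral_orbitMeasure_div_add {ι : Type*} [Fintype ι] {ζ : X → ι} {q : ℕ}
    {p : (Fin q → ι) → ℝ} (hp : ∀ w, 0 < p w) (hsum : ∑ w, p w ≤ 1) {M : ℝ} (hM0 : 0 ≤ M)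
    (hM : ∀ w, -Real.log (p w) ≤ M) (hq : 0 < q) {ψ : X → ℝ} (hψ : StronglyMeasurable ψ)
    (hψζ : ∀ x, codeLength f ζ p x ≤ ψ x) {E : Finset X} {n : ℕ} (hn : 0 < n)
    (hinj : InjOn (itinerary f ζ n) E) :
    Real.log E.card / n ≤ (∫ x, ψ x ∂orbitMeasure f E n) / q + M / n := by
  rcases E.eq_empty_or_nonempty with rfl | hE
  · simpa [orbitMeasure] using div_nonneg hM0 n.cast_nonneg
  have hcard : (0 : ℝ) < E.card := by exact_mod_cast hE.card_pos
  have hq' : (0 : ℝ) < q := by exact_mod_cast hq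
  have hn' : (0 : ℝ) < n := by exact_mod_cast hn
  have hcount : (q : ℝ) * (E.card * Real.log E.card) ≤
      ∑ x ∈ E, ∑ j ∈ Finset.range n, ψ (f^[j] x) + E.card * (q * M) := by
    refine (mul_card_mul_log_card_le_sum_codeLength hp hsum hM hq hinj).trans ?_
    rw [Finset.sum_add_distrib, Finset.sum_const, nsmul_eq_mul]
    gcongr
    exact hψζ _
  calc Real.log E.card / n
      = q * (E.card * Real.log E.card) / (n * E.card * q) := by field_simp
    _ ≤ (∑ x ∈ E, ∑ j ∈ Finset.range n, ψ (f^[j] x) + E.card * (q * M)) / (n * E.card * q) := by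
        gcongr
    _ = (∫ x, ψ x ∂orbitMeasure f E n) / q + M / n := by
        rw [integral_orbitMeasure E n hψ]
        field_simp

variable [TopologicalSpace X]

lemma norm_integral_comp_sub_integral_orbitMeasure_le [OpensMeasurableSpace X]
    (hf : Continuous f) (E : Finset X) (n : ℕ) (ψ : BoundedContinuousFunction X ℝ) :
    ‖∫ x, ψ (f x) ∂orbitMeasure f E n - ∫ x, ψ x ∂orbitMeasure f E n‖ ≤ 2 * ‖ψ‖ / n := by
  rcases E.eq_empty_or_nonempty with rfl | hE
  · simp only [orbitMeasure, Finset.sum_empty, smul_zero, integral_zero_measure, sub_self,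
      norm_zero]
    positivity
  have hcard : (0 : ℝ) < E.card := by exact_mod_cast hE.card_pos
  have htelescope (x : X) : ∑ k ∈ Finset.range n, ψ (f (f^[k] x)) -
      ∑ k ∈ Finset.range n, ψ (f^[k] x) = ψ (f^[n] x) - ψ x := by
    rw [← Finset.sum_sub_distrib]
    simpa only [Function.iterate_succ_apply', Function.iterate_zero_apply] using
      Finset.sum_range_sub (fun k => ψ (f^[k] x)) n
  rw [integral_orbitMeasure E n (ψ := fun x => ψ (f x)) (ψ.continuous.comp hf).stronglyMeasurable,
    integral_orbitMeasure E n ψ.continuous.stronglyMeasurable, ← mul_sub,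
    ← Finset.sum_sub_distrib, norm_mul, norm_inv, Real.norm_of_nonneg (by positivity)]
  calc ((n : ℝ) * E.card)⁻¹ * ‖∑ x ∈ E, (∑ k ∈ Finset.range n, ψ (f (f^[k] x)) -
        ∑ k ∈ Finset.range n, ψ (f^[k] x))‖
      ≤ ((n : ℝ) * E.card)⁻¹ * ∑ x ∈ E, 2 * ‖ψ‖ := by
        gcongr
        refine norm_sum_le_of_le _ fun x _ => ?_
        rw [htelescope, ← dist_eq_norm]
        exact ψ.dist_le_two_norm _ _
    _ = 2 * ‖ψ‖ / n := by
        rw [Finset.sum_const, nsmul_eq_mul, mul_inv, mul_assoc, inv_mul_cancel_left₀ hcard.ne',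
          div_eq_inv_mul]

lemma measurePreserving_of_tendsto_integral_orbitMeasure [BorelSpace X] [HasOuterApproxClosed X]
    (hf : Continuous f) {E : ℕ → Finset X} {l : Filter ℕ} [l.NeBot] (hl : l ≤ atTop)
    {μ : Measure X} [IsFiniteMeasure μ]
    (hconv : ∀ ψ : BoundedContinuousFunction X ℝ,
      Tendsto (fun n => ∫ x, ψ x ∂orbitMeasure f (E n) n) l (𝓝 (∫ x, ψ x ∂μ))) :
    MeasurePreserving f μ μ := by
  refine ⟨hf.measurable, ext_of_forall_integral_eq_of_IsFiniteMeasure fun ψ => ?_⟩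
  rw [integral_map hf.measurable.aemeasurable ψ.continuous.aestronglyMeasurable]
  refine sub_eq_zero.1 (tendsto_nhds_unique
    ((hconv (ψ.compContinuous ⟨f, hf⟩)).sub (hconv ψ)) ?_)
  exact squeeze_zero_norm
    (fun n => norm_integral_comp_sub_integral_orbitMeasure_le hf (E n) n ψ)
    ((tendsto_const_div_atTop_nhds_zero_nat _).mono_left hl)

end OrbitMeasure

section ContinuousMajorant

variable {X : Type*} [TopologicalSpace X] [NormalSpace X] [CompactSpace X] [MeasurableSpace X]
  [OpensMeasurableSpace X] {μ : Measure X} [IsFiniteMeasure μ] {f : X → X} {ι : Type*} [Fintype ι]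

lemma exists_continuousMap_ge_codeLength_integral_le (hf : Continuous f)
    (hfμ : MeasurePreserving f μ μ) {A K : ι → Set X} (hK : ∀ i, IsClosed (K i))
    (hKA : ∀ i, K i ⊆ A i) {ζ : X → ι} (hKζ : ∀ i, K i ⊆ interior (ζ ⁻¹' {i})) {q : ℕ}
    {p : (Fin q → ι) → ℝ} (hp : ∀ w, 0 < p w) (hsum : ∑ w, p w ≤ 1) {M : ℝ} (hM0 : 0 ≤ M)
    (hM : ∀ w, -Real.log (p w) ≤ M) :
    ∃ ψ : C(X, ℝ), (∀ x, codeLength f ζ p x ≤ ψ x) ∧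
      ∫ x, ψ x ∂μ ≤ ∑ w, μ.real (orbitCylinder f A w) * -Real.log (p w) +
        M * (q * μ.real (⋃ i, K i)ᶜ) := by
  have hLζ (w : Fin q → ι) : orbitCylinder f K w ⊆ interior (itinerary f ζ q ⁻¹' {w}) := by
    rw [← orbitCylinder_fiber]
    exact (orbitCylinder_mono hKζ w).trans (orbitCylinder_interior_subset hf _ w)
  have hLc (w : Fin q → ι) := isClosed_orbitCylinder hf hK w
  have hLd : Pairwise (Disjoint on fun w : Fin q → ι => orbitCylinder f K w) := fun v w hvw =>
    ((disjoint_singleton.2 hvw).preimage (itinerary f ζ q)).mono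
      ((hLζ v).trans interior_subset) ((hLζ w).trans interior_subset)
  obtain ⟨ψ, hψζ, hψM, hψL⟩ := exists_continuousMap_ge_comp_eqOn_isClosed hLc hLζ hM
  have hψint : Integrable ψ μ :=
    ψ.continuous.integrable_of_hasCompactSupport (HasCompactSupport.of_compactSpace _)
  refine ⟨ψ, hψζ, ?_⟩
  calc ∫ x, ψ x ∂μ
      ≤ ∑ w, μ.real (orbitCylinder f K w) * -Real.log (p w) +
          M * μ.real (⋃ w : Fin q → ι, orbitCylinder f K w)ᶜ :=
        integral_le_sum_mul_measureReal_add (fun w => (hLc w).measurableSet) hLd hψint hψL hψM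
    _ ≤ ∑ w, μ.real (orbitCylinder f A w) * -Real.log (p w) +
          M * (q * μ.real (⋃ i, K i)ᶜ) := by
        gcongr with w
        · exact neg_log_nonneg_of_sum_le_one hp hsum w
        · exact measure_ne_top μ _
        · exact orbitCylinder_mono hKA w
        · exact measureReal_compl_iUnion_orbitCylinder_le hfμ fun i => (hK i).measurableSet

end ContinuousMajorant

section SeparatedSets

variable {X : Type*} [PseudoMetricSpace X] [CompactSpace X] [MeasurableSpace X] [BorelSpace X]
  {μ : Measure X} {f : X → X} {ε : ℝ}

lemma exists_isClosed_subset_exists_separating_coding {κ τ : Type*} [Finite κ]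
    [IsFiniteMeasure μ] {A : κ → Set X} (hAm : ∀ i, MeasurableSet (A i))
    (hAd : Pairwise (AEDisjoint μ on A)) (hcover : μ (⋃ i, A i)ᶜ = 0)
    (hdiam : ∀ i, Metric.diam (A i) < ε) {c : X → τ} (hc : ∀ x y, c x = c y → dist x y ≤ ε)
    {δ : ℝ} (hδ : 0 < δ) :
    ∃ (K : κ → Set X) (ζ : X → κ ⊕ τ), (∀ i, IsClosed (K i)) ∧ (∀ i, K i ⊆ A i) ∧
      μ.real (⋃ i, K i)ᶜ ≤ δ ∧ (∀ i, K i ⊆ interior (ζ ⁻¹' {Sum.inl i})) ∧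
      ∀ x y, ζ x = ζ y → dist x y ≤ ε := by
  obtain ⟨K, hKc, hKA, hKd, hKμ⟩ := exists_isClosed_pairwise_disjoint_subset hAm hAd hcover hδ
  have hKdiam (i : κ) : Metric.diam (K i) < ε :=
    (Metric.diam_mono (hKA i) (isCompact_univ.isBounded.subset (subset_univ _))).trans_lt (hdiam i)
  obtain ⟨ζ, hKζ, hζ⟩ := exists_separating_coding hKc hKd hKdiam hc
  exact ⟨K, ζ, hKc, hKA, hKμ, hKζ, hζ⟩

variable [IsProbabilityMeasure μ]

lemma exists_continuousMap_log_card_div_le {κ : Type*} [Fintype κ] {A : κ → Set X}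
    (hf : Continuous f) (hfμ : MeasurePreserving f μ μ) (hAm : ∀ i, MeasurableSet (A i))
    (hAd : Pairwise (AEDisjoint μ on A)) (hcover : μ (⋃ i, A i)ᶜ = 0) (hε : 0 < ε)
    (hdiam : ∀ i, Metric.diam (A i) < ε) {q : ℕ} (hq : 0 < q) {η : ℝ} (hη : 0 < η) :
    ∃ (ψ : C(X, ℝ)) (M : ℝ),
      ∫ x, ψ x ∂μ ≤ ∑ w : Fin q → κ, Real.negMulLog (μ.real (orbitCylinder f A w)) + η ∧
      ∀ (n : ℕ) (E : Finset X), 0 < n →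
        (E : Set X).Pairwise (fun x y => ∃ i < n, ε < dist (f^[i] x) (f^[i] y)) →
        Real.log E.card / n ≤ (∫ x, ψ x ∂orbitMeasure f E n) / q + M / n := by
  -- The letters in `c.range` code the points outside the thickened closed sets. They are attached
  -- to empty sets, so enlarging the alphabet does not change the entropy.
  obtain ⟨c, hc⟩ := exists_simpleFunc_dist_lt_of_eq (X := X) hε
  obtain ⟨p, hp, hpsum, hpent⟩ := exists_pos_weight_sum_mul_neg_log_le
    (a := fun w : Fin q → κ ⊕ c.range => μ.real (orbitCylinder f (Sum.elim A fun _ => ∅) w))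
    (fun _ => measureReal_nonneg)
    ((sum_orbitCylinder_sumElim_empty (F := id) rfl).trans_le
      (sum_measureReal_orbitCylinder_le_one hfμ hAm hAd)) (half_pos hη)
  rw [sum_orbitCylinder_sumElim_empty Real.negMulLog_zero] at hpent
  have hlog (w) (_ : w ∈ Finset.univ) := neg_log_nonneg_of_sum_le_one hp hpsum w
  let M := ∑ w, -Real.log (p w)
  have hM0 : 0 ≤ M := Finset.sum_nonneg hlog
  have hM (w) : -Real.log (p w) ≤ M := Finset.single_le_sum hlog (Finset.mem_univ w)
  have hMq : 0 < M * q + 1 := by positivity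
  obtain ⟨K, ζ, hKc, hKA, hKμ, hKζ, hζ⟩ := exists_isClosed_subset_exists_separating_coding hAm hAd
    hcover hdiam (c := fun x => (⟨c x, c.mem_range_self x⟩ : c.range))
    (fun x y hxy => (hc x y (congrArg Subtype.val hxy)).le)
    (div_pos (half_pos hη) hMq)
  obtain ⟨ψ, hψζ, hψ⟩ := exists_continuousMap_ge_codeLength_integral_le hf hfμ
    (A := Sum.elim A fun _ => ∅) (K := Sum.elim K fun _ => ∅)
    (Sum.rec hKc fun _ => isClosed_empty) (Sum.rec hKA fun _ => Subset.rfl)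
    (Sum.rec hKζ fun _ => empty_subset _) hp hpsum hM0 hM
  simp only [iUnion_sumElim, iUnion_empty, union_empty] at hψ
  have hsmall : M * (q * μ.real (⋃ i, K i)ᶜ) ≤ η / 2 := by
    rw [le_div_iff₀ hMq] at hKμ
    nlinarith [measureReal_nonneg (μ := μ) (s := (⋃ i, K i)ᶜ)]
  exact ⟨ψ, M, by linarith, fun n E hn hE => log_card_div_le_integral_orbitMeasure_div_add hp hpsum
    hM0 hM hq ψ.continuous.stronglyMeasurable hψζ hn (injOn_itinerary_of_pairwise_lt_dist hζ hE)⟩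

lemma limsup_log_card_div_le_partEnt_dynJoin_div (hf : Continuous f)
    (hfμ : MeasurePreserving f μ μ) (hε : 0 < ε) {E : ℕ → Finset X} {l : Filter ℕ} [l.NeBot]
    (hl : l ≤ atTop)
    (hsep : ∀ᶠ n in l, (E n : Set X).Pairwise fun x y => ∃ i < n, ε < dist (f^[i] x) (f^[i] y))
    (hconv : ∀ ψ : C(X, ℝ), Tendsto (fun n => ∫ x, ψ x ∂orbitMeasure f (E n) n) l
      (𝓝 (∫ x, ψ x ∂μ)))
    {P : Finset (Set X)} (hP : IsPartition μ P) (hPε : partDiamLt P ε) {q : ℕ} (hq : 0 < q) :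
    limsup (fun n : ℕ => Real.log (E n).card / n) l ≤ partEnt μ (dynJoin f P q) / q := by
  have hq' : (0 : ℝ) < q := by exact_mod_cast hq
  have hcover : μ (⋃ A : P, (A : Set X))ᶜ = 0 := by
    rw [compl_eq_univ_sdiff, iUnion_subtype]
    exact hP.2.1
  rw [le_div_iff₀ hq']
  refine le_of_forall_pos_le_add fun η hη => ?_
  obtain ⟨ψ, M, hψ, hbound⟩ := exists_continuousMap_log_card_div_le hf hfμ
    (fun A : P => hP.1 A A.2) hP.pairwise_aedisjoint hcover hε (fun A : P => hPε A A.2) hq hη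
  rw [← partEnt_dynJoin hfμ hP] at hψ
  have hlim : Tendsto (fun n : ℕ => (∫ x, ψ x ∂orbitMeasure f (E n) n) / q + M / n) l
      (𝓝 ((∫ x, ψ x ∂μ) / q)) := by
    simpa only [add_zero] using
      ((hconv ψ).div_const _).add ((tendsto_const_div_atTop_nhds_zero_nat M).mono_left hl)
  have hle : limsup (fun n : ℕ => Real.log (E n).card / n) l ≤ (∫ x, ψ x ∂μ) / q := by
    rw [← hlim.limsup_eq]
    refine limsup_le_limsup ?_ (isCoboundedUnder_le_of_le l fun n =>
      div_nonneg (Real.log_natCast_nonneg _) n.cast_nonneg) hlim.isBoundedUnder_le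
    filter_upwards [hsep, hl (eventually_gt_atTop 0)] with n hE hn
    exact hbound n (E n) hn hE
  exact ((le_div_iff₀ hq').1 hle).trans hψ

end SeparatedSets

end MMD

theorem stmt10_general {X : Type*} [PseudoMetricSpace X] [CompactSpace X] [MeasurableSpace X]
    [BorelSpace X] {f : X → X} (hf : Continuous f) {ε : ℝ} (hε : 0 < ε) {l : Filter ℕ} [l.NeBot]
    (hl : l ≤ atTop) {E : ℕ → Finset X}
    (hsep : ∀ᶠ n in l, (E n : Set X).Pairwise fun x y => ∃ i < n, ε < dist (f^[i] x) (f^[i] y))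
    {μ : Measure X} [IsProbabilityMeasure μ]
    (hconv : ∀ ψ : C(X, ℝ), Tendsto (fun n => ∫ x, ψ x ∂orbitMeasure f (E n) n) l
      (𝓝 (∫ x, ψ x ∂μ))) :
    limsup (fun n : ℕ => Real.log (E n).card / n) l ≤ infEnt μ f ε := by
  have hfμ : MeasurePreserving f μ μ :=
    measurePreserving_of_tendsto_integral_orbitMeasure hf hl fun ψ => hconv ψ
  refine le_csInf (Set.Nonempty.image _ (exists_isPartition_partDiamLt μ hε)) ?_
  rintro _ ⟨P, ⟨hP, hPε⟩, rfl⟩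
  refine le_limsup_of_frequently_le (Eventually.frequently ?_)
    (isBoundedUnder_partEnt_dynJoin_div hfμ hP)
  filter_upwards [eventually_gt_atTop 0] with q hq
  exact limsup_log_card_div_le_partEnt_dynJoin_div hf hfμ hε hl hsep hconv hP hPε hq

theorem stmt10 {X : Type*} [MetricSpace X] [CompactSpace X] [Nonempty X]
    [MeasurableSpace X] [BorelSpace X]
    (f : X → X) (hf : Continuous f) (ε : ℝ) (hε : 0 < ε)
    (E : ℕ → Finset X) (hEne : ∀ n, (E n).Nonempty)
    (hsep : ∀ n, ∀ x ∈ E n, ∀ y ∈ E n, x ≠ y → ∃ i < n, ε < dist (f^[i] x) (f^[i] y))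
    (μ : ProbabilityMeasure X)
    (hconv : ∀ ψ : C(X, ℝ), Tendsto (fun n : ℕ =>
        ∫ x, ψ x ∂(((n * (E n).card : ℕ) : ℝ≥0∞)⁻¹ •
          ∑ x ∈ E n, ∑ k ∈ Finset.range n, Measure.dirac (f^[k] x))) atTop
        (𝓝 (∫ x, ψ x ∂(μ : Measure X)))) :
    limsup (fun n : ℕ => Real.log ((E n).card) / n) atTop ≤ infEnt (μ : Measure X) f ε := by
  exact stmt10_general hf hε le_rfl (.of_forall hsep) hconv

end
end
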